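/- arXiv:1711.02710 — 2 statements merged into one kernel-verified Lean document; each statement's English description precedes it below -/
import Mathlib

section
/- Let Λ ∈ M_n(ℝ) be a nonzero diagonal matrix with tr Λ = 0, let U be a Haar-distributed random matrix in the unitary group U(n), and define A = U Λ U* with entries a_{jk}. Let X ∈ ℝ^d be a random vector whose d coordinates are distinct choices from the collection consisting of the diagonal entries a_{jj}, the quantities √2·Re(a_{jk}) for j < k, and the quantities √2·Im(a_{jk}) for j < k. Let g be a standard Gaussian random vector in ℝ^d. Then W₁( (√(n²−1)/‖Λ‖_HS) · X , g ) ≤ 9 d √n · (‖Λ‖_op² / ‖Λ‖_HS²). -/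
open MeasureTheory ProbabilityTheory Matrix
open scoped Matrix

/-- Entrywise (Borel product) measurable structure on matrices. -/
instance matrixMeasurableSpace {m n α : Type*} [MeasurableSpace α] :
    MeasurableSpace (Matrix m n α) :=
  inferInstanceAs (MeasurableSpace (m → n → α))

/-- Hilbert–Schmidt norm of a real square matrix. -/
noncomputable def hsNormR {n : ℕ} (M : Matrix (Fin n) (Fin n) ℝ) : ℝ :=
  Real.sqrt ((M * Mᵀ).trace)

/-- Operator (ℓ²→ℓ²) norm of a real square matrix. -/
noncomputable def opNormR {n : ℕ} (M : Matrix (Fin n) (Fin n) ℝ) : ℝ :=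
  ‖Matrix.toEuclideanCLM (𝕜 := ℝ) M‖

/-- Labels for entries of an `n × n` Hermitian matrix: a diagonal entry, the (scaled)
real part of an above-diagonal entry, or the (scaled) imaginary part thereof. -/
def EntryLabel (n : ℕ) : Type :=
  Fin n ⊕ {p : Fin n × Fin n // p.1 < p.2} ⊕ {p : Fin n × Fin n // p.1 < p.2}

/-- The real-valued entry functional corresponding to a label. -/
noncomputable def entryValue {n : ℕ} (M : Matrix (Fin n) (Fin n) ℂ) :
    EntryLabel n → ℝ :=
  Sum.elim (fun j => (M j j).re)
    (Sum.elim (fun p => Real.sqrt 2 * (M p.1.1 p.1.2).re)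
      (fun p => Real.sqrt 2 * (M p.1.1 p.1.2).im))

open scoped NNReal ENNReal RealInnerProductSpace

/-!
A unitarily invariant Hermitian matrix `A` satisfies, by differentiating `E ψ(e^{tB} A e^{-tB})`
in `t`, the identities `E dψ(A)[B A - A B] = 0` for skew-Hermitian `B`, hence for linear statistics
also for every matrix `B`. Taking `B` to be the matrix units and summing produces an explicit Stein
kernel for any vector of statistics `tr (M i * A)`: its `(i, j)` entry is
`n⁻¹ tr (M j * (A² * M i - A * M i * A))`. Applied to the entries of `A` and `A²`, the same
identities compute their second moments, so that the kernel is close to the identity in `L²`.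
Finally, a Stein kernel controls the Wasserstein distance to the Gaussian: along the arc
`sin θ • Y + cos θ • Z` from an independent Gaussian `Z` to `Y`, the derivative of `E h` is
`sin θ` times an integral of `dh` against `(T - 1) Z`, of size at most the Stein discrepancy.
-/

section LipschitzFunctions

variable {Ω E : Type*} [MeasurableSpace Ω] {P : Measure Ω} [NormedAddCommGroup E]

lemma memLp_comp_of_lipschitzWith [IsFiniteMeasure P] {X : Ω → E} {p : ENNReal} (hX : MemLp X p P)
    {u : E → ℝ} {K : ℝ≥0} (hu : LipschitzWith K u) :
    MemLp (fun ω ↦ u (X ω)) p P := by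
  have hsub : LipschitzWith K fun x ↦ u x - u 0 := by
    simpa using hu.sub (LipschitzWith.const (u 0))
  refine ((hsub.comp_memLp (sub_self _) hX).add (memLp_const (u 0))).ae_eq
    (ae_of_all _ fun ω ↦ ?_)
  exact sub_add_cancel _ _

lemma abs_integral_sub_integral_comp_le [IsProbabilityMeasure P] {X : Ω → E} (hX : MemLp X 2 P)
    {f h : E → ℝ} {K L : ℝ≥0} (hh : LipschitzWith K h) (hf : LipschitzWith L f) {ε : ℝ}
    (hhf : ∀ x, dist (h x) (f x) ≤ ε) :
    |∫ ω, h (X ω) ∂P - ∫ ω, f (X ω) ∂P| ≤ ε := by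
  rw [← integral_sub ((memLp_comp_of_lipschitzWith hX hh).integrable one_le_two)
    ((memLp_comp_of_lipschitzWith hX hf).integrable one_le_two)]
  simpa using norm_integral_le_of_norm_le_const (f := fun ω ↦ h (X ω) - f (X ω))
    (ae_of_all P fun ω ↦ (Real.dist_eq _ _).symm.trans_le (hhf (X ω)))

variable [NormedSpace ℝ E]

lemma lipschitzWith_fderiv_apply {u : E → ℝ} {C : ℝ≥0} (hC : LipschitzWith C (fderiv ℝ u))
    (a : E) : LipschitzWith (‖a‖₊ * C) fun x ↦ fderiv ℝ u x a :=
  ((ContinuousLinearMap.apply ℝ ℝ a).lipschitz.weaken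
    (ContinuousLinearMap.opNorm_le_bound _ (norm_nonneg _) fun φ ↦ by
      simpa [mul_comm] using φ.le_opNorm a)).comp hC

lemma hasFDerivAt_comp_smul_add {u : E → ℝ} (hu : Differentiable ℝ u) (s : ℝ) (w y : E) :
    HasFDerivAt (fun x ↦ u (s • x + w)) (s • fderiv ℝ u (s • y + w)) y := by
  have h := (hu (s • y + w)).hasFDerivAt.comp y (((hasFDerivAt_id y).const_smul s).add_const w)
  convert! h using 1
  ext x
  simp

lemma lipschitzWith_comp_smul_add {u : E → ℝ} {K : ℝ≥0} (hu : LipschitzWith K u) (s : ℝ) (w : E) :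
    LipschitzWith (K * ‖s‖₊) fun x ↦ u (s • x + w) :=
  .of_dist_le_mul fun x y ↦ by
    simpa [mul_assoc, dist_smul₀] using hu.dist_le_mul (s • x + w) (s • y + w)

end LipschitzFunctions

section GaussianIntegrationByParts

variable {E : Type*} [NormedAddCommGroup E] [MeasurableSpace E] [BorelSpace E]

lemma memLp_two_of_lipschitzWith [NormedSpace ℝ E] [CompleteSpace E]
    [SecondCountableTopology E] {μ : Measure E} [IsGaussian μ] {u : E → ℝ} {K : ℝ≥0}
    (hu : LipschitzWith K u) : MemLp u 2 μ :=
  memLp_comp_of_lipschitzWith (IsGaussian.memLp_id μ 2 (by simp)) hu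

lemma hasDerivAt_gaussianPDFReal (μ : ℝ) (v : ℝ≥0) (x : ℝ) :
    HasDerivAt (gaussianPDFReal μ v) (-(x - μ) / v * gaussianPDFReal μ v x) x := by
  have hexp : HasDerivAt (fun y : ℝ ↦ -(y - μ) ^ 2 / (2 * v)) (-(2 * (x - μ)) / (2 * v)) x := by
    simpa using (((hasDerivAt_id x).sub_const μ).pow 2).neg.div_const (2 * (v : ℝ))
  rw [gaussianPDFReal_def]
  refine (hexp.exp.const_mul _).congr_deriv ?_
  rw [← mul_neg, mul_div_mul_left _ _ two_ne_zero]
  ring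

lemma integrable_gaussianReal_iff {μ : ℝ} {v : ℝ≥0} (hv : v ≠ 0) {u : ℝ → ℝ} :
    Integrable u (gaussianReal μ v) ↔ Integrable fun x ↦ gaussianPDFReal μ v x * u x := by
  rw [gaussianReal_of_var_ne_zero _ hv, integrable_withDensity_iff_integrable_smul'
    (measurable_gaussianPDF μ v) (ae_of_all _ fun _ ↦ gaussianPDF_lt_top)]
  simp only [toReal_gaussianPDF, smul_eq_mul]

theorem integral_sub_mul_gaussianReal (μ : ℝ) (v : ℝ≥0) {u : ℝ → ℝ} {K : ℝ≥0}
    (hu : Differentiable ℝ u) (hK : LipschitzWith K u) :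
    ∫ x, (x - μ) * u x ∂gaussianReal μ v = v * ∫ x, deriv u x ∂gaussianReal μ v := by
  rcases eq_or_ne v 0 with rfl | hv
  · simp
  have hv' : (v : ℝ) ≠ 0 := by exact_mod_cast hv
  have hu2 : MemLp u 2 (gaussianReal μ v) := memLp_two_of_lipschitzWith hK
  have hdu : Integrable (deriv u) (gaussianReal μ v) :=
    .of_bound (measurable_deriv u).aestronglyMeasurable K
      (ae_of_all _ fun x ↦ norm_deriv_le_of_lipschitz hK)
  have hxu : Integrable (fun x ↦ (x - μ) * u x) (gaussianReal μ v) :=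
    (memLp_two_of_lipschitzWith
      ((LipschitzWith.id.sub (LipschitzWith.const μ)))).integrable_mul hu2
  have hparts := integral_mul_deriv_eq_deriv_mul_of_integrable
    (fun x _ ↦ (hu x).hasDerivAt) (fun x _ ↦ hasDerivAt_gaussianPDFReal μ v x)
    ((((integrable_gaussianReal_iff hv).1 hxu).div_const (-v : ℝ)).congr
      (ae_of_all _ fun x ↦ by simp only [Pi.mul_apply]; field_simp))
    (((integrable_gaussianReal_iff hv).1 hdu).congr (ae_of_all _ fun x ↦ mul_comm _ _))
    (((integrable_gaussianReal_iff hv).1 (hu2.integrable one_le_two)).congr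
      (ae_of_all _ fun x ↦ mul_comm _ _))
  simp only [integral_gaussianReal_eq_integral_smul hv, smul_eq_mul]
  calc ∫ x, gaussianPDFReal μ v x * ((x - μ) * u x)
      = ∫ x, -(v * (u x * (-(x - μ) / v * gaussianPDFReal μ v x))) := by
        congr with x; field_simp
    _ = v * ∫ x, deriv u x * gaussianPDFReal μ v x := by
        rw [integral_neg, integral_const_mul, hparts]; ring
    _ = v * ∫ x, gaussianPDFReal μ v x * deriv u x := by simp only [mul_comm]

variable [InnerProductSpace ℝ E] [FiniteDimensional ℝ E]

lemma integral_stdGaussian_eq_integral_integral {n : ℕ} (b : OrthonormalBasis (Fin (n + 1)) ℝ E)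
    (j : Fin (n + 1)) {v : E → ℝ} (hv : Integrable v (stdGaussian E)) :
    ∫ z, v z ∂stdGaussian E =
      ∫ y : Fin n → ℝ, ∫ t, v (t • b j + ∑ i, y i • b (j.succAbove i)) ∂gaussianReal 0 1
        ∂Measure.pi fun _ ↦ gaussianReal 0 1 := by
  have hsum : Measurable fun x : Fin (n + 1) → ℝ ↦ ∑ i, x i • b i := by fun_prop
  have mp := (measurePreserving_piFinSuccAbove (fun _ : Fin (n + 1) ↦ gaussianReal 0 1) j).symm
  rw [stdGaussian_eq_map_pi_orthonormalBasis b] at hv ⊢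
  have hv' := (mp.integrable_comp_emb (MeasurableEquiv.measurableEmbedding _)).2
    ((integrable_map_measure hv.aestronglyMeasurable hsum.aemeasurable).1 hv)
  simp only [Function.comp_def] at hv'
  rw [integral_map hsum.aemeasurable hv.aestronglyMeasurable, ← mp.integral_comp',
    integral_prod_symm _ hv']
  simp only [MeasurableEquiv.piFinSuccAbove_symm_apply, Fin.insertNthEquiv_apply,
    Fin.sum_univ_succAbove _ j, Fin.insertNth_apply_same, Fin.insertNth_apply_succAbove]

lemma integrable_inner_mul_stdGaussian (a : E) {u : E → ℝ} {K : ℝ≥0} (hK : LipschitzWith K u) :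
    Integrable (fun z ↦ ⟪a, z⟫ * u z) (stdGaussian E) :=
  (memLp_two_of_lipschitzWith (innerSL ℝ a).lipschitz).integrable_mul
    (memLp_two_of_lipschitzWith hK)

lemma integrable_fderiv_apply_stdGaussian (a : E) {u : E → ℝ} {K : ℝ≥0}
    (hK : LipschitzWith K u) : Integrable (fun z ↦ fderiv ℝ u z a) (stdGaussian E) :=
  .of_bound (measurable_fderiv_apply_const ℝ u a).aestronglyMeasurable (K * ‖a‖)
    (ae_of_all _ fun _ ↦ (fderiv ℝ u _).le_of_opNorm_le (norm_fderiv_le_of_lipschitz ℝ hK) a)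

lemma integral_inner_orthonormalBasis_mul_stdGaussian {n : ℕ} (b : OrthonormalBasis (Fin n) ℝ E)
    (j : Fin n) {u : E → ℝ} {K : ℝ≥0} (hu : Differentiable ℝ u) (hK : LipschitzWith K u) :
    ∫ z, ⟪b j, z⟫ * u z ∂stdGaussian E = ∫ z, fderiv ℝ u z (b j) ∂stdGaussian E := by
  obtain _ | m := n
  · exact j.elim0
  rw [integral_stdGaussian_eq_integral_integral b j (integrable_inner_mul_stdGaussian _ hK),
    integral_stdGaussian_eq_integral_integral b j (integrable_fderiv_apply_stdGaussian _ hK)]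
  congr with y
  have hderiv (t : ℝ) : HasDerivAt (fun t : ℝ ↦ u (t • b j + ∑ i, y i • b (j.succAbove i)))
      (fderiv ℝ u (t • b j + ∑ i, y i • b (j.succAbove i)) (b j)) t := by
    refine (hu _).hasFDerivAt.comp_hasDerivAt t ?_
    simpa using ((hasDerivAt_id t).smul_const (b j)).add_const
      (∑ i, y i • b (j.succAbove i))
  have hline : LipschitzWith 1 fun t : ℝ ↦ t • b j + ∑ i, y i • b (j.succAbove i) :=
    .of_dist_le_mul fun s t ↦ by simp [dist_eq_norm, ← sub_smul, norm_smul]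
  have hone := integral_sub_mul_gaussianReal 0 1 (fun t ↦ (hderiv t).differentiableAt)
    (hK.comp hline)
  simpa [inner_add_right, inner_sum, inner_smul_right, (hderiv _).deriv,
    b.inner_eq_ite, Fin.succAbove_ne] using hone

theorem integral_inner_mul_stdGaussian (a : E) {u : E → ℝ} {K : ℝ≥0} (hu : Differentiable ℝ u)
    (hK : LipschitzWith K u) :
    ∫ z, ⟪a, z⟫ * u z ∂stdGaussian E = ∫ z, fderiv ℝ u z a ∂stdGaussian E := by
  let b := stdOrthonormalBasis ℝ E
  have hbasis (i) : ∫ z, ⟪b i, z⟫ * u z ∂stdGaussian E = ∫ z, fderiv ℝ u z (b i) ∂stdGaussian E :=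
    integral_inner_orthonormalBasis_mul_stdGaussian b i hu hK
  rw [← b.sum_repr' a]
  simp only [sum_inner, real_inner_smul_left, map_sum, map_smul, smul_eq_mul, Finset.sum_mul,
    mul_assoc]
  rw [integral_finsetSum _ fun i _ ↦ (integrable_inner_mul_stdGaussian _ hK).const_mul _,
    integral_finsetSum _ fun i _ ↦ (integrable_fderiv_apply_stdGaussian _ hK).const_mul _]
  simp only [integral_const_mul, hbasis]

lemma integral_inner_sq_stdGaussian (a : E) : ∫ z, ⟪a, z⟫ ^ 2 ∂stdGaussian E = ‖a‖ ^ 2 := by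
  have h := integral_inner_mul_stdGaussian a (innerSL ℝ a).differentiable (innerSL ℝ a).lipschitz
  simp only [ContinuousLinearMap.fderiv, innerSL_apply_apply, real_inner_self_eq_norm_sq] at h
  simpa [sq] using h

end GaussianIntegrationByParts

section Smoothing

variable {E V F : Type*} [NormedAddCommGroup E] [NormedSpace ℝ E] [FiniteDimensional ℝ E]
  [MeasurableSpace E] [BorelSpace E] [NormedAddCommGroup V] [NormedSpace ℝ V] [NormedAddCommGroup F]
  [NormedSpace ℝ F]

open scoped Convolution

lemma lipschitzWith_convolution {μ : Measure E} [IsLocallyFiniteMeasure μ]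
    (L : V →L[ℝ] ℝ →L[ℝ] F) {k : E → V} (hk : Continuous k) (hkc : HasCompactSupport k)
    {f : E → ℝ} {K : ℝ≥0} (hf : LipschitzWith K f) :
    LipschitzWith (‖L‖₊ * (∫ t, ‖k t‖ ∂μ).toNNReal * K) (k ⋆[L, μ] f) := by
  have hint (x : E) : Integrable (fun t ↦ L (k t) (f (x - t))) μ :=
    hkc.convolutionExists_left_of_continuous_right L (hk.locallyIntegrable) hf.continuous x
  have hnorm : Integrable (fun t ↦ ‖k t‖) μ := (hk.integrable_of_hasCompactSupport hkc).norm
  refine .of_dist_le_mul fun x y ↦ ?_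
  rw [dist_eq_norm, convolution_def, convolution_def, ← integral_sub (hint x) (hint y)]
  calc ‖∫ t, (L (k t) (f (x - t)) - L (k t) (f (y - t))) ∂μ‖
      ≤ ∫ t, ‖L‖ * ‖k t‖ * (K * dist x y) ∂μ := by
        refine norm_integral_le_of_norm_le ((hnorm.const_mul _).mul_const _)
          (ae_of_all _ fun t ↦ ?_)
        rw [← map_sub]
        refine (L.le_opNorm₂ _ _).trans (mul_le_mul_of_nonneg_left ?_ (by positivity))
        simpa [dist_eq_norm] using hf.dist_le_mul (x - t) (y - t)
    _ = _ := by
        rw [integral_mul_const, integral_const_mul, NNReal.coe_mul, NNReal.coe_mul,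
          Real.coe_toNNReal _ (integral_nonneg fun _ ↦ norm_nonneg _), coe_nnnorm]
        ring

theorem exists_contDiff_lipschitzWith_approx {f : E → ℝ} {K : ℝ≥0}
    (hf : LipschitzWith K f) {ε : ℝ} (hε : 0 < ε) :
    ∃ h : E → ℝ, ContDiff ℝ 2 h ∧ LipschitzWith K h ∧ (∃ C, LipschitzWith C (fderiv ℝ h)) ∧
      ∀ x, dist (h x) (f x) ≤ ε := by
  let μ : Measure E := Measure.addHaar
  obtain ⟨δ, hδ, hKδ⟩ : ∃ δ > 0, K * δ ≤ ε :=
    ⟨ε / (K + 1), by positivity, by rw [← mul_div_assoc, div_le_iff₀ (by positivity)]; nlinarith⟩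
  let φ : ContDiffBump (0 : E) := ⟨δ / 2, δ, by positivity, by linarith⟩
  have hkc : HasCompactSupport (φ.normed μ) := φ.hasCompactSupport_normed
  have hk : ContDiff ℝ 2 (φ.normed μ) := φ.contDiff_normed
  let L : ℝ →L[ℝ] ℝ →L[ℝ] ℝ := .lsmul ℝ ℝ
  have hmass : ∫ t, ‖φ.normed μ t‖ ∂μ = 1 := by
    simp only [Real.norm_of_nonneg (φ.nonneg_normed _), φ.integral_normed]
  have hL : ‖L‖₊ ≤ 1 := ContinuousLinearMap.opNorm_lsmul_le
  have hfderiv : fderiv ℝ (φ.normed μ ⋆[L, μ] f) =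
      fderiv ℝ (φ.normed μ) ⋆[L.precompL E, μ] f :=
    funext fun x ↦ (hkc.hasFDerivAt_convolution_left L (hk.of_le one_le_two)
      hf.continuous.locallyIntegrable x).fderiv
  refine ⟨φ.normed μ ⋆[L, μ] f,
    hkc.contDiff_convolution_left L hk hf.continuous.locallyIntegrable, ?_, ?_, fun x ↦ ?_⟩
  · refine (lipschitzWith_convolution L hk.continuous hkc hf).weaken ?_
    rw [hmass, Real.toNNReal_one, mul_one]
    exact mul_le_of_le_one_left' hL
  · rw [hfderiv]
    exact ⟨_, lipschitzWith_convolution _ (hk.continuous_fderiv two_ne_zero) (hkc.fderiv ℝ) hf⟩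
  · refine φ.dist_normed_convolution_le hf.continuous.aestronglyMeasurable fun y hy ↦ ?_
    exact (hf.dist_le_mul_of_le (Metric.mem_ball.1 hy).le).trans hKδ

end Smoothing

section SteinKernel

variable {Ω E ι : Type*} [MeasurableSpace Ω] {P : Measure Ω} [NormedAddCommGroup E]
  [InnerProductSpace ℝ E]

lemma memLp_two_inner_prod {Ω' : Type*} [MeasurableSpace Ω'] {Q : Measure Ω'} [SFinite P]
    [SFinite Q] {X : Ω → E} {Z : Ω' → E} (hX : MemLp X 2 P) (hZ : MemLp Z 2 Q) :
    MemLp (fun p : Ω × Ω' ↦ ⟪X p.1, Z p.2⟫) 2 (P.prod Q) := by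
  have hm : AEStronglyMeasurable (fun p : Ω × Ω' ↦ ⟪X p.1, Z p.2⟫) (P.prod Q) :=
    hX.1.comp_fst.inner hZ.1.comp_snd
  refine (memLp_two_iff_integrable_sq hm).2 ?_
  refine (hX.norm.integrable_sq.mul_prod hZ.norm.integrable_sq).mono' (hm.pow 2)
    (ae_of_all _ fun p ↦ ?_)
  rw [Real.norm_of_nonneg (sq_nonneg _), ← mul_pow]
  exact sq_le_sq.2 (by simpa using abs_real_inner_le_norm (X p.1) (Z p.2))

lemma abs_integral_le_sqrt_integral_sq [IsProbabilityMeasure P] {X : Ω → ℝ} (hX : MemLp X 2 P) :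
    |∫ ω, X ω ∂P| ≤ √(∫ ω, X ω ^ 2 ∂P) := by
  refine Real.abs_le_sqrt (sub_nonneg.1 ?_)
  simpa [variance_eq_sub hX] using variance_nonneg X P

variable [Fintype ι] {b : OrthonormalBasis ι ℝ E} {Y : Ω → E} {T : Ω → ι → E}

/-- `T` is a Stein kernel of the random vector `Y`: `E ⟪Y, F Y⟫ = E tr (T · F'(Y))` for smooth
Lipschitz vector fields `F`. The kernel is encoded by its rows `T ω i` with respect to an
orthonormal basis `b`, and the identity is required for the fields `F = u • b i`. -/
structure IsSteinKernel (b : OrthonormalBasis ι ℝ E) (P : Measure Ω) (Y : Ω → E)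
    (T : Ω → ι → E) : Prop where
  memLp_two : MemLp Y 2 P
  memLp_two_kernel (i : ι) : MemLp (fun ω ↦ T ω i) 2 P
  integral_inner_mul {u : E → ℝ} {K : ℝ≥0} (hu : ContDiff ℝ 1 u) (hK : LipschitzWith K u) (i : ι) :
    ∫ ω, ⟪b i, Y ω⟫ * u (Y ω) ∂P = ∫ ω, fderiv ℝ u (Y ω) (T ω i) ∂P

/-- The Stein discrepancy `√(E ‖T - 1‖²)` of a kernel `T`, in the Hilbert–Schmidt norm. -/
noncomputable def steinDiscrepancy (b : OrthonormalBasis ι ℝ E) (P : Measure Ω)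
    (T : Ω → ι → E) : ℝ :=
  √(∫ ω, ∑ i, ‖T ω i - b i‖ ^ 2 ∂P)

lemma IsSteinKernel.integral_inner_mul_comp (hT : IsSteinKernel b P Y T) {u : E → ℝ} {K : ℝ≥0}
    (hu : ContDiff ℝ 1 u) (hK : LipschitzWith K u) (i : ι) (s : ℝ) (w : E) :
    ∫ ω, ⟪b i, Y ω⟫ * u (s • Y ω + w) ∂P = s * ∫ ω, fderiv ℝ u (s • Y ω + w) (T ω i) ∂P := by
  have hcomp : ContDiff ℝ 1 fun x ↦ u (s • x + w) := hu.comp (by fun_prop)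
  rw [hT.integral_inner_mul hcomp (lipschitzWith_comp_smul_add hK s w), ← integral_const_mul]
  simp only [(hasFDerivAt_comp_smul_add (hu.differentiable one_ne_zero) s w _).fderiv,
    _root_.smul_apply, smul_eq_mul]

lemma integral_apply_eq_sum_integral (b : OrthonormalBasis ι ℝ E) {G : Ω → E →L[ℝ] ℝ}
    {X : Ω → E} {g : ι → Ω → ℝ} (hg : ∀ i ω, ⟪b i, X ω⟫ * G ω (b i) = g i ω)
    (hint : ∀ i, Integrable (g i) P) : ∫ ω, G ω (X ω) ∂P = ∑ i, ∫ ω, g i ω ∂P := by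
  rw [← integral_finsetSum _ fun i _ ↦ hint i]
  congr with ω
  rw [← b.sum_repr' (X ω)]
  simp only [map_sum, map_smul, smul_eq_mul, hg]

variable [FiniteDimensional ℝ E] [MeasurableSpace E] [BorelSpace E]

lemma integral_inner_sq_prod_stdGaussian [SFinite P] {X : Ω → E} (hX : MemLp X 2 P) :
    ∫ p, ⟪X p.1, p.2⟫ ^ 2 ∂P.prod (stdGaussian E) = ∫ ω, ‖X ω‖ ^ 2 ∂P := by
  rw [integral_prod _ (memLp_two_inner_prod hX IsGaussian.memLp_two_fun_id).integrable_sq]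
  simp only [integral_inner_sq_stdGaussian]

lemma memLp_two_smul_add_smul_prod [IsProbabilityMeasure P] (hY : MemLp Y 2 P) (s c : ℝ) :
    MemLp (fun p : Ω × E ↦ s • Y p.1 + c • p.2) 2 (P.prod (stdGaussian E)) :=
  ((hY.comp_fst _).const_smul s).add
    ((IsGaussian.memLp_two_fun_id (μ := stdGaussian E)).comp_snd P |>.const_smul c)

lemma aestronglyMeasurable_fderiv_smul_add_smul_prod [IsProbabilityMeasure P] (hY : MemLp Y 2 P)
    {u : E → ℝ} (hu : ContDiff ℝ 1 u) {X : Ω × E → E}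
    (hX : AEStronglyMeasurable X (P.prod (stdGaussian E))) (s c : ℝ) :
    AEStronglyMeasurable (fun p : Ω × E ↦ fderiv ℝ u (s • Y p.1 + c • p.2) (X p))
      (P.prod (stdGaussian E)) :=
  (ContinuousLinearMap.id ℝ (E →L[ℝ] ℝ)).aestronglyMeasurable_comp₂
    ((hu.continuous_fderiv one_ne_zero).comp_aestronglyMeasurable
      (memLp_two_smul_add_smul_prod hY s c).1) hX

lemma integrable_fderiv_smul_add_smul_prod [IsProbabilityMeasure P] (hY : MemLp Y 2 P)
    {u : E → ℝ} {K : ℝ≥0} (hu : ContDiff ℝ 1 u) (hK : LipschitzWith K u) {X : Ω × E → E}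
    (hX : MemLp X 2 (P.prod (stdGaussian E))) (s c : ℝ) :
    Integrable (fun p : Ω × E ↦ fderiv ℝ u (s • Y p.1 + c • p.2) (X p))
      (P.prod (stdGaussian E)) :=
  ((hX.integrable one_le_two).norm.const_mul (K : ℝ)).mono'
    (aestronglyMeasurable_fderiv_smul_add_smul_prod hY hu hX.1 s c)
    (ae_of_all _ fun _ ↦
      (fderiv ℝ u _).le_of_opNorm_le (norm_fderiv_le_of_lipschitz ℝ hK) _)

/-- The expectation of `h` at the point `sin θ • Y + cos θ • Z` of the circular arc joining an
independent standard Gaussian vector `Z` (at `θ = 0`) to `Y` (at `θ = π / 2`). -/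
noncomputable def gaussianArcExpectation (P : Measure Ω) (Y : Ω → E) (h : E → ℝ) (θ : ℝ) : ℝ :=
  ∫ p, h (Real.sin θ • Y p.1 + Real.cos θ • p.2) ∂P.prod (stdGaussian E)

lemma hasDerivAt_gaussianArcExpectation [IsProbabilityMeasure P] (hY : MemLp Y 2 P)
    {h : E → ℝ} {K : ℝ≥0} (hh : ContDiff ℝ 1 h) (hK : LipschitzWith K h) (θ : ℝ) :
    HasDerivAt (gaussianArcExpectation P Y h)
      (∫ p, fderiv ℝ h (Real.sin θ • Y p.1 + Real.cos θ • p.2)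
        (Real.cos θ • Y p.1 + -Real.sin θ • p.2) ∂P.prod (stdGaussian E)) θ := by
  have hint (θ : ℝ) : Integrable (fun p : Ω × E ↦ h (Real.sin θ • Y p.1 + Real.cos θ • p.2))
      (P.prod (stdGaussian E)) :=
    (memLp_comp_of_lipschitzWith (memLp_two_smul_add_smul_prod hY _ _) hK).integrable one_le_two
  have hbound : Integrable (fun p : Ω × E ↦ K * (‖Y p.1‖ + ‖p.2‖)) (P.prod (stdGaussian E)) :=
    (((hY.integrable one_le_two).norm.comp_fst _).add
      ((IsGaussian.memLp_two_fun_id.integrable one_le_two).norm.comp_snd P)).const_mul _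
  refine (hasDerivAt_integral_of_dominated_loc_of_deriv_le (F' := fun θ p ↦
      fderiv ℝ h (Real.sin θ • Y p.1 + Real.cos θ • p.2)
        (Real.cos θ • Y p.1 + -Real.sin θ • p.2)) Filter.univ_mem
    (.of_forall fun θ ↦ (hint θ).1) (hint θ)
    (aestronglyMeasurable_fderiv_smul_add_smul_prod hY hh
      (memLp_two_smul_add_smul_prod hY _ _).1 _ _)
    (ae_of_all _ fun p θ _ ↦ ?_) hbound (ae_of_all _ fun p θ _ ↦ ?_)).2
  · refine (ContinuousLinearMap.le_of_opNorm_le _ (norm_fderiv_le_of_lipschitz ℝ hK) _).trans ?_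
    gcongr
    refine (norm_add_le _ _).trans (add_le_add ?_ ?_) <;> rw [norm_smul]
    · exact mul_le_of_le_one_left (norm_nonneg _) (Real.abs_cos_le_one θ)
    · exact mul_le_of_le_one_left (norm_nonneg _) (by simpa using Real.abs_sin_le_one θ)
  · exact (hh.differentiable one_ne_zero _).hasFDerivAt.comp_hasDerivAt θ
      (((Real.hasDerivAt_sin θ).smul_const _).add ((Real.hasDerivAt_cos θ).smul_const _))

namespace IsSteinKernel

variable {u h : E → ℝ} {K : ℝ≥0}

lemma mul_integral_inner_mul_prod [IsProbabilityMeasure P] (hT : IsSteinKernel b P Y T)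
    (hu : ContDiff ℝ 1 u) (hK : LipschitzWith K u) (i : ι) (s c : ℝ) :
    c * ∫ p, ⟪b i, Y p.1⟫ * u (s • Y p.1 + c • p.2) ∂P.prod (stdGaussian E) =
      s * ∫ p, ⟪T p.1 i, p.2⟫ * u (s • Y p.1 + c • p.2) ∂P.prod (stdGaussian E) := by
  have hv : MemLp (fun p : Ω × E ↦ u (s • Y p.1 + c • p.2)) 2 (P.prod (stdGaussian E)) :=
    memLp_comp_of_lipschitzWith (memLp_two_smul_add_smul_prod hT.memLp_two s c) hK
  have hY : Integrable (fun p : Ω × E ↦ ⟪b i, Y p.1⟫ * u (s • Y p.1 + c • p.2))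
      (P.prod (stdGaussian E)) :=
    ((hT.memLp_two.const_inner (b i)).comp_fst _).integrable_mul hv
  have hTZ : Integrable (fun p : Ω × E ↦ ⟪T p.1 i, p.2⟫ * u (s • Y p.1 + c • p.2))
      (P.prod (stdGaussian E)) :=
    (memLp_two_inner_prod (hT.memLp_two_kernel i) IsGaussian.memLp_two_fun_id).integrable_mul hv
  have hderiv := integrable_fderiv_smul_add_smul_prod hT.memLp_two hu hK
    ((hT.memLp_two_kernel i).comp_fst (stdGaussian E)) s c
  have hgauss (ω : Ω) : ∫ z, ⟪T ω i, z⟫ * u (s • Y ω + c • z) ∂stdGaussian E =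
      c * ∫ z, fderiv ℝ u (s • Y ω + c • z) (T ω i) ∂stdGaussian E := by
    simp only [add_comm (s • Y ω)]
    rw [integral_inner_mul_stdGaussian (T ω i)
      (fun z ↦ (hasFDerivAt_comp_smul_add (hu.differentiable one_ne_zero) c _ z).differentiableAt)
      (lipschitzWith_comp_smul_add hK c _), ← integral_const_mul]
    simp only [(hasFDerivAt_comp_smul_add (hu.differentiable one_ne_zero) c _ _).fderiv,
      _root_.smul_apply, smul_eq_mul]
  rw [integral_prod_symm _ hY, integral_prod _ hTZ]
  simp only [hT.integral_inner_mul_comp hu hK, hgauss, integral_const_mul]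
  rw [← integral_prod_symm _ hderiv, integral_prod _ hderiv]
  ring

lemma integral_fderiv_arc_eq [IsProbabilityMeasure P] (hT : IsSteinKernel b P Y T)
    (hh : ContDiff ℝ 2 h) {C : ℝ≥0} (hC : LipschitzWith C (fderiv ℝ h)) (s c : ℝ) :
    ∫ p, fderiv ℝ h (s • Y p.1 + c • p.2) (c • Y p.1 + -s • p.2) ∂P.prod (stdGaussian E) =
      s * ∫ p, fderiv ℝ h (s • Y p.1 + c • p.2) (∑ i, ⟪T p.1 i - b i, p.2⟫ • b i)
        ∂P.prod (stdGaussian E) := by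
  let u (i : ι) (x : E) : ℝ := fderiv ℝ h x (b i)
  let v (p : Ω × E) : E := s • Y p.1 + c • p.2
  have hu (i : ι) : ContDiff ℝ 1 (u i) := (hh.fderiv_right le_rfl).clm_apply contDiff_const
  have huK (i : ι) : LipschitzWith (‖b i‖₊ * C) (u i) := lipschitzWith_fderiv_apply hC (b i)
  have huv (i : ι) : MemLp (fun p ↦ u i (v p)) 2 (P.prod (stdGaussian E)) :=
    memLp_comp_of_lipschitzWith (memLp_two_smul_add_smul_prod hT.memLp_two s c) (huK i)
  have hZ : MemLp (fun z : E ↦ z) 2 (stdGaussian E) := IsGaussian.memLp_two_fun_id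
  have hY (i : ι) : Integrable (fun p : Ω × E ↦ ⟪b i, Y p.1⟫ * u i (v p)) _ :=
    ((hT.memLp_two.const_inner (b i)).comp_fst (stdGaussian E)).integrable_mul (huv i)
  have hTZ (i : ι) : Integrable (fun p : Ω × E ↦ ⟪T p.1 i, p.2⟫ * u i (v p)) _ :=
    (memLp_two_inner_prod (hT.memLp_two_kernel i) hZ).integrable_mul (huv i)
  have hbZ (i : ι) : Integrable (fun p : Ω × E ↦ ⟪b i, p.2⟫ * u i (v p)) _ :=
    ((hZ.const_inner (b i)).comp_snd P).integrable_mul (huv i)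
  have harc (i : ι) (p : Ω × E) : ⟪b i, c • Y p.1 + -s • p.2⟫ * u i (v p) =
      c * (⟪b i, Y p.1⟫ * u i (v p)) - s * (⟪b i, p.2⟫ * u i (v p)) := by
    rw [inner_add_right, real_inner_smul_right, real_inner_smul_right]
    ring
  have herr (i : ι) (p : Ω × E) : ⟪b i, ∑ j, ⟪T p.1 j - b j, p.2⟫ • b j⟫ * u i (v p) =
      ⟪T p.1 i, p.2⟫ * u i (v p) - ⟪b i, p.2⟫ * u i (v p) := by
    rw [b.orthonormal.inner_right_fintype, inner_sub_left, sub_mul]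
  rw [integral_apply_eq_sum_integral b harc fun i ↦ ((hY i).const_mul c).sub ((hbZ i).const_mul s),
    integral_apply_eq_sum_integral b herr fun i ↦ (hTZ i).sub (hbZ i), Finset.mul_sum]
  refine Finset.sum_congr rfl fun i _ ↦ ?_
  rw [integral_sub ((hY i).const_mul c) ((hbZ i).const_mul s), integral_sub (hTZ i) (hbZ i),
    integral_const_mul, integral_const_mul, hT.mul_integral_inner_mul_prod (hu i) (huK i), mul_sub]

lemma memLp_two_sum_inner_smul [IsProbabilityMeasure P] (hT : IsSteinKernel b P Y T) :
    MemLp (fun p : Ω × E ↦ ∑ i, ⟪T p.1 i - b i, p.2⟫ • b i) 2 (P.prod (stdGaussian E)) :=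
  memLp_finsetSum _ fun i _ ↦ (ContinuousLinearMap.toSpanSingleton ℝ (b i)).comp_memLp'
    (memLp_two_inner_prod ((hT.memLp_two_kernel i).sub (memLp_const (b i)))
      IsGaussian.memLp_two_fun_id)

lemma integral_norm_sq_sum_inner_smul [IsProbabilityMeasure P] (hT : IsSteinKernel b P Y T) :
    ∫ p, ‖∑ i, ⟪T p.1 i - b i, p.2⟫ • b i‖ ^ 2 ∂P.prod (stdGaussian E) =
      ∫ ω, ∑ i, ‖T ω i - b i‖ ^ 2 ∂P := by
  have hD (i : ι) : MemLp (fun ω ↦ T ω i - b i) 2 P :=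
    (hT.memLp_two_kernel i).sub (memLp_const (b i))
  simp only [← b.sum_sq_inner_right, b.orthonormal.inner_right_fintype]
  rw [integral_finsetSum _ fun i _ ↦
      (memLp_two_inner_prod (hD i) IsGaussian.memLp_two_fun_id).integrable_sq]
  simp only [integral_inner_sq_prod_stdGaussian (hD _), b.sum_sq_inner_right]
  exact (integral_finsetSum _ fun i _ ↦ (hD i).norm.integrable_sq).symm

lemma abs_integral_fderiv_arc_le [IsProbabilityMeasure P] (hT : IsSteinKernel b P Y T)
    (hh : ContDiff ℝ 2 h) (hK : LipschitzWith K h) {C : ℝ≥0} (hC : LipschitzWith C (fderiv ℝ h))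
    (s c : ℝ) :
    |∫ p, fderiv ℝ h (s • Y p.1 + c • p.2) (c • Y p.1 + -s • p.2) ∂P.prod (stdGaussian E)| ≤
      |s| * (K * steinDiscrepancy b P T) := by
  have hG := hT.memLp_two_sum_inner_smul
  rw [hT.integral_fderiv_arc_eq hh hC, abs_mul]
  gcongr
  calc |∫ p, fderiv ℝ h (s • Y p.1 + c • p.2) (∑ i, ⟪T p.1 i - b i, p.2⟫ • b i)
        ∂P.prod (stdGaussian E)|
      ≤ ∫ p, K * ‖∑ i, ⟪T p.1 i - b i, p.2⟫ • b i‖ ∂P.prod (stdGaussian E) :=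
        norm_integral_le_of_norm_le ((hG.integrable one_le_two).norm.const_mul _)
          (ae_of_all _ fun p ↦
            (fderiv ℝ h _).le_of_opNorm_le (norm_fderiv_le_of_lipschitz ℝ hK) _)
    _ ≤ K * steinDiscrepancy b P T := by
        rw [integral_const_mul, steinDiscrepancy, ← hT.integral_norm_sq_sum_inner_smul]
        gcongr
        exact (le_abs_self _).trans (abs_integral_le_sqrt_integral_sq hG.norm)

lemma abs_integral_sub_integral_stdGaussian_le_of_contDiff [IsProbabilityMeasure P]
    (hT : IsSteinKernel b P Y T) (hh : ContDiff ℝ 2 h) (hK : LipschitzWith K h) {C : ℝ≥0}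
    (hC : LipschitzWith C (fderiv ℝ h)) :
    |∫ ω, h (Y ω) ∂P - ∫ z, h z ∂stdGaussian E| ≤ K * steinDiscrepancy b P T := by
  set D := K * steinDiscrepancy b P T
  set Φ := gaussianArcExpectation P Y h
  have hΦ (θ : ℝ) :=
    hasDerivAt_gaussianArcExpectation hT.memLp_two (hh.of_le one_le_two) hK θ
  have hB (θ : ℝ) : HasDerivAt (fun θ ↦ (1 - Real.cos θ) * D) (Real.sin θ * D) θ := by
    simpa using ((Real.hasDerivAt_cos θ).const_sub 1).mul_const D
  have hπ : (Real.pi / 2) ∈ Set.Icc 0 (Real.pi / 2) := ⟨by positivity, le_rfl⟩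
  have hle := image_norm_le_of_norm_deriv_right_le_deriv_boundary' (f := fun θ ↦ Φ θ - Φ 0)
    (a := 0) (b := Real.pi / 2)
    (fun θ _ ↦ ((hΦ θ).sub_const _).continuousAt.continuousWithinAt)
    (fun θ _ ↦ ((hΦ θ).sub_const _).hasDerivWithinAt) (by simp)
    (fun θ _ ↦ (hB θ).continuousAt.continuousWithinAt) (fun θ _ ↦ (hB θ).hasDerivWithinAt)
    (fun θ hθ ↦ (hT.abs_integral_fderiv_arc_le hh hK hC _ _).trans_eq (by
      rw [abs_of_nonneg (Real.sin_nonneg_of_nonneg_of_le_pi hθ.1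
        (by linarith [hθ.2, Real.pi_pos]))])) hπ
  simpa [Φ, gaussianArcExpectation, integral_fun_fst (fun ω ↦ h (Y ω)), integral_fun_snd h]
    using hle

theorem abs_integral_sub_integral_stdGaussian_le [IsProbabilityMeasure P]
    (hT : IsSteinKernel b P Y T) {f : E → ℝ} (hf : LipschitzWith K f) :
    |∫ ω, f (Y ω) ∂P - ∫ z, f z ∂stdGaussian E| ≤ K * steinDiscrepancy b P T := by
  refine le_of_forall_pos_le_add fun ε hε ↦ ?_
  obtain ⟨h, hh, hK, ⟨C, hC⟩, hhf⟩ := exists_contDiff_lipschitzWith_approx hf (half_pos hε)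
  have hsmooth := hT.abs_integral_sub_integral_stdGaussian_le_of_contDiff hh hK hC
  have hYh := abs_integral_sub_integral_comp_le hT.memLp_two hK hf hhf
  have hZh := abs_integral_sub_integral_comp_le
    (IsGaussian.memLp_two_fun_id (μ := stdGaussian E)) hK hf hhf
  rw [abs_le] at *
  constructor <;> linarith

end IsSteinKernel

end SteinKernel

section UnitarilyInvariantMatrices

open scoped Matrix.Norms.L2Operator

instance matrixBorelSpace {m n α : Type*} [Countable m] [Countable n] [TopologicalSpace α]
    [SecondCountableTopology α] [MeasurableSpace α] [BorelSpace α] : BorelSpace (Matrix m n α) :=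
  inferInstanceAs (BorelSpace (m → n → α))

theorem apply_mul_apply_swap_of_isHermitian {ι : Type*} {A : Matrix ι ι ℂ} (hA : A.IsHermitian)
    (r s : ι) :
    A r s * A s r = ((‖A r s‖ ^ 2 : ℝ) : ℂ) := by
  rw [← hA.apply s r, Complex.ofReal_pow]
  exact Complex.mul_conj' _

variable {Ω ι : Type*} [MeasurableSpace Ω] {P : Measure Ω} [Fintype ι] [DecidableEq ι]

/-- A bounded random Hermitian matrix whose law is invariant under conjugation by unitary
matrices. -/
structure IsUnitarilyInvariant (P : Measure Ω) (A : Ω → Matrix ι ι ℂ) : Prop where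
  measurable : Measurable A
  isHermitian ω : (A ω).IsHermitian
  exists_norm_le : ∃ R, ∀ ω, ‖A ω‖ ≤ R
  map_conj V : V ∈ unitaryGroup ι ℂ → P.map (fun ω ↦ V * A ω * Vᴴ) = P.map A

theorem norm_conj_of_mem_unitaryGroup {V : Matrix ι ι ℂ} (hV : V ∈ unitaryGroup ι ℂ)
    (B : Matrix ι ι ℂ) : ‖V * B * Vᴴ‖ = ‖B‖ := by
  rw [← star_eq_conjTranspose, CStarRing.norm_mul_mem_unitary _ (Unitary.star_mem hV),
    CStarRing.norm_mem_unitary_mul _ hV]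

theorem isUnitarilyInvariant_conj_of_haar {U : Ω → Matrix ι ι ℂ} (hU : Measurable U)
    (hU_mem : ∀ ω, U ω ∈ unitaryGroup ι ℂ)
    (hU_haar : ∀ V ∈ unitaryGroup ι ℂ, P.map (fun ω ↦ V * U ω) = P.map U)
    {D : Matrix ι ι ℂ} (hD : D.IsHermitian) :
    IsUnitarilyInvariant P fun ω ↦ U ω * D * (U ω)ᴴ where
  measurable := (by fun_prop : Continuous fun V : Matrix ι ι ℂ ↦ V * D * Vᴴ).measurable.comp hU
  isHermitian ω := isHermitian_mul_mul_conjTranspose (U ω) hD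
  exists_norm_le := ⟨‖D‖, fun ω ↦ (norm_conj_of_mem_unitaryGroup (hU_mem ω) D).le⟩
  map_conj V hV := by
    have hcont : Continuous fun W : Matrix ι ι ℂ ↦ W * D * Wᴴ := by fun_prop
    have hVU : Measurable fun ω ↦ V * U ω :=
      (by fun_prop : Continuous fun W : Matrix ι ι ℂ ↦ V * W).measurable.comp hU
    calc P.map (fun ω ↦ V * (U ω * D * (U ω)ᴴ) * Vᴴ)
        = (P.map fun ω ↦ V * U ω).map fun W ↦ W * D * Wᴴ := by
          rw [Measure.map_map hcont.measurable hVU]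
          simp only [Function.comp_def, conjTranspose_mul, mul_assoc]
      _ = P.map fun ω ↦ U ω * D * (U ω)ᴴ := by
          rw [hU_haar V hV, Measure.map_map hcont.measurable hU]
          rfl

namespace IsUnitarilyInvariant

variable {A : Ω → Matrix ι ι ℂ}

theorem comp (hA : IsUnitarilyInvariant P A) {Φ : Matrix ι ι ℂ → Matrix ι ι ℂ}
    (hΦ : Continuous Φ) (hΦ_herm : ∀ M : Matrix ι ι ℂ, M.IsHermitian → (Φ M).IsHermitian)
    (hΦ_conj : ∀ V ∈ unitaryGroup ι ℂ, ∀ M, Φ (V * M * Vᴴ) = V * Φ M * Vᴴ) :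
    IsUnitarilyInvariant P fun ω ↦ Φ (A ω) where
  measurable := hΦ.measurable.comp hA.measurable
  isHermitian ω := hΦ_herm _ (hA.isHermitian ω)
  exists_norm_le := by
    obtain ⟨R, hR⟩ := hA.exists_norm_le
    obtain ⟨R', hR'⟩ := (isCompact_closedBall (0 : Matrix ι ι ℂ) R).exists_bound_of_continuousOn
      hΦ.continuousOn
    exact ⟨R', fun ω ↦ hR' _ (by simpa using hR ω)⟩
  map_conj V hV := by
    have hconj : Measurable fun ω ↦ V * A ω * Vᴴ :=
      (by fun_prop : Continuous fun M : Matrix ι ι ℂ ↦ V * M * Vᴴ).measurable.comp hA.measurable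
    calc P.map (fun ω ↦ V * Φ (A ω) * Vᴴ) = (P.map fun ω ↦ V * A ω * Vᴴ).map Φ := by
          rw [Measure.map_map hΦ.measurable hconj]
          simp only [Function.comp_def, hΦ_conj V hV]
      _ = P.map fun ω ↦ Φ (A ω) := by
          rw [hA.map_conj V hV, Measure.map_map hΦ.measurable hA.measurable]
          rfl

theorem memLp_comp [IsFiniteMeasure P] {E : Type*} [NormedAddCommGroup E]
    (hA : IsUnitarilyInvariant P A) {ψ : Matrix ι ι ℂ → E} (hψ : Continuous ψ) (p : ℝ≥0∞) :
    MemLp (fun ω ↦ ψ (A ω)) p P := by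
  obtain ⟨R, hR⟩ := hA.exists_norm_le
  obtain ⟨R', hR'⟩ := (isCompact_closedBall (0 : Matrix ι ι ℂ) R).exists_bound_of_continuousOn
    hψ.continuousOn
  exact MemLp.of_bound (hψ.comp_aestronglyMeasurable hA.measurable.aestronglyMeasurable) R'
    (.of_forall fun ω ↦ hR' _ (by simpa using hR ω))

theorem integrable_comp [IsFiniteMeasure P] {E : Type*} [NormedAddCommGroup E]
    (hA : IsUnitarilyInvariant P A) {ψ : Matrix ι ι ℂ → E} (hψ : Continuous ψ) :
    Integrable (fun ω ↦ ψ (A ω)) P :=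
  memLp_one_iff_integrable.1 (hA.memLp_comp hψ 1)

theorem integral_re_comp [IsFiniteMeasure P] (hA : IsUnitarilyInvariant P A)
    {ψ : Matrix ι ι ℂ → ℂ} (hψ : Continuous ψ) :
    ∫ ω, (ψ (A ω)).re ∂P = (∫ ω, ψ (A ω) ∂P).re :=
  integral_re (hA.integrable_comp hψ)

theorem integral_comp_conj {E : Type*} [NormedAddCommGroup E] [NormedSpace ℝ E]
    (hA : IsUnitarilyInvariant P A) {ψ : Matrix ι ι ℂ → E} (hψ : Continuous ψ)
    {V : Matrix ι ι ℂ} (hV : V ∈ unitaryGroup ι ℂ) :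
    ∫ ω, ψ (V * A ω * Vᴴ) ∂P = ∫ ω, ψ (A ω) ∂P := by
  have hconj : Measurable fun ω ↦ V * A ω * Vᴴ :=
    (by fun_prop : Continuous fun M : Matrix ι ι ℂ ↦ V * M * Vᴴ).measurable.comp hA.measurable
  rw [← integral_map hconj.aemeasurable hψ.aestronglyMeasurable (f := ψ), hA.map_conj V hV,
    integral_map hA.measurable.aemeasurable hψ.aestronglyMeasurable]

end IsUnitarilyInvariant

theorem exp_real_smul_mem_unitaryGroup {B : Matrix ι ι ℂ} (hB : Bᴴ = -B) (t : ℝ) :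
    NormedSpace.exp (t • B) ∈ unitaryGroup ι ℂ := by
  let : NormedAlgebra ℚ (Matrix ι ι ℂ) := .restrictScalars ℚ ℝ _
  refine NormedSpace.exp_mem_unitary_of_mem_skewAdjoint (skewAdjoint.mem_iff.2 ?_)
  rw [star_smul, star_eq_conjTranspose, hB, star_trivial, smul_neg]

theorem hasDerivAt_exp_smul_conj {B : Matrix ι ι ℂ} (hB : Bᴴ = -B) (A : Matrix ι ι ℂ) (t : ℝ) :
    HasDerivAt (fun s : ℝ ↦ NormedSpace.exp (s • B) * A * (NormedSpace.exp (s • B))ᴴ)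
      (B * (NormedSpace.exp (t • B) * A * (NormedSpace.exp (t • B))ᴴ) -
        NormedSpace.exp (t • B) * A * (NormedSpace.exp (t • B))ᴴ * B) t := by
  have hV := hasDerivAt_exp_smul_const' (𝕂 := ℝ) B t
  refine ((hV.mul_const A).mul hV.star).congr_deriv ?_
  rw [star_mul, star_eq_conjTranspose, star_eq_conjTranspose, hB]
  noncomm_ring

theorem IsUnitarilyInvariant.integral_fderiv_commutator_eq_zero_of_skew [IsFiniteMeasure P]
    {A : Ω → Matrix ι ι ℂ} (hA : IsUnitarilyInvariant P A) {E : Type*} [NormedAddCommGroup E]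
    [NormedSpace ℝ E] {ψ : Matrix ι ι ℂ → E} (hψ : ContDiff ℝ 1 ψ)
    {B : Matrix ι ι ℂ} (hB : Bᴴ = -B) :
    ∫ ω, fderiv ℝ ψ (A ω) (B * A ω - A ω * B) ∂P = 0 := by
  set W : ℝ → Ω → Matrix ι ι ℂ := fun t ω ↦
    NormedSpace.exp (t • B) * A ω * (NormedSpace.exp (t • B))ᴴ with hW
  have hWm t : Measurable (W t) :=
    (by fun_prop : Continuous fun M ↦ NormedSpace.exp (t • B) * M *
      (NormedSpace.exp (t • B))ᴴ).measurable.comp hA.measurable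
  obtain ⟨R, hR⟩ := hA.exists_norm_le
  have hWR t ω : ‖W t ω‖ ≤ R :=
    (norm_conj_of_mem_unitaryGroup (exp_real_smul_mem_unitaryGroup hB t) _).trans_le (hR ω)
  have hψ'c : Continuous fun M ↦ fderiv ℝ ψ M (B * M - M * B) :=
    (hψ.continuous_fderiv one_ne_zero).clm_apply (by fun_prop)
  obtain ⟨R', hR'⟩ := (isCompact_closedBall (0 : Matrix ι ι ℂ) R).exists_bound_of_continuousOn
    hψ'c.continuousOn
  have hderiv := (hasDerivAt_integral_of_dominated_loc_of_deriv_le (μ := P) (x₀ := (0 : ℝ))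
    (F := fun t ω ↦ ψ (W t ω)) (F' := fun t ω ↦ fderiv ℝ ψ (W t ω) (B * W t ω - W t ω * B))
    (bound := fun _ ↦ R') Filter.univ_mem
    (.of_forall fun t ↦ hψ.continuous.comp_aestronglyMeasurable (hWm t).aestronglyMeasurable)
    (by simpa [hW] using hA.integrable_comp hψ.continuous)
    (hψ'c.comp_aestronglyMeasurable (hWm 0).aestronglyMeasurable)
    (.of_forall fun ω t _ ↦ hR' _ (by simpa using hWR t ω)) (integrable_const R')
    (.of_forall fun ω t _ ↦ ((hψ.differentiable one_ne_zero _).hasFDerivAt.comp_hasDerivAt t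
      (hasDerivAt_exp_smul_conj hB (A ω) t)))).2
  have hconst t : ∫ ω, ψ (W t ω) ∂P = ∫ ω, ψ (A ω) ∂P :=
    hA.integral_comp_conj hψ.continuous (exp_real_smul_mem_unitaryGroup hB t)
  simp only [hconst] at hderiv
  simpa [hW] using hderiv.unique (hasDerivAt_const _ _)

/-- `G` is the gradient of `u` for the trace pairing: `tr (G A * C)` is the derivative of `u` at
`A` in every Hermitian direction `C`. As both sides need not agree for other `C`, the function `u`
may be real-valued or otherwise not holomorphic. -/
structure HasTraceGradient (u : Matrix ι ι ℂ → ℂ) (G : Matrix ι ι ℂ → Matrix ι ι ℂ) : Prop where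
  contDiff : ContDiff ℝ 1 u
  continuous : Continuous G
  fderiv_apply A C : C.IsHermitian → fderiv ℝ u A C = (G A * C).trace

theorem hasTraceGradient_const (c : ℂ) :
    HasTraceGradient (fun _ : Matrix ι ι ℂ ↦ c) fun _ ↦ 0 where
  contDiff := contDiff_const
  continuous := continuous_const
  fderiv_apply A C _ := by simp

theorem hasTraceGradient_trace_mul (M : Matrix ι ι ℂ) :
    HasTraceGradient (fun A ↦ (M * A).trace) fun _ ↦ M := by
  let L : Matrix ι ι ℂ →L[ℝ] ℂ :=
    LinearMap.toContinuousLinearMap (traceLinearMap ι ℝ ℂ ∘ₗ LinearMap.mulLeft ℝ M)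
  exact ⟨L.contDiff, continuous_const, fun A C _ ↦ DFunLike.congr_fun (L.fderiv (x := A)) C⟩

namespace HasTraceGradient

variable {u v : Matrix ι ι ℂ → ℂ} {F G : Matrix ι ι ℂ → Matrix ι ι ℂ}

theorem mul (hu : HasTraceGradient u F) (hv : HasTraceGradient v G) :
    HasTraceGradient (fun A ↦ u A * v A) fun A ↦ u A • G A + v A • F A where
  contDiff := hu.contDiff.mul hv.contDiff
  continuous := (hu.contDiff.continuous.smul hv.continuous).add
    (hv.contDiff.continuous.smul hu.continuous)
  fderiv_apply A C hC := by
    rw [fderiv_fun_mul (hu.contDiff.differentiable one_ne_zero A)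
      (hv.contDiff.differentiable one_ne_zero A)]
    simp [hu.fderiv_apply A C hC, hv.fderiv_apply A C hC, add_mul]

theorem integral_trace_mul_commutator_eq_zero [IsFiniteMeasure P] (hu : HasTraceGradient u G)
    {A : Ω → Matrix ι ι ℂ} (hA : IsUnitarilyInvariant P A) (B : Matrix ι ι ℂ) :
    ∫ ω, (G (A ω) * (B * A ω - A ω * B)).trace ∂P = 0 := by
  have skew {S : Matrix ι ι ℂ} (hS : Sᴴ = -S) :
      ∫ ω, (G (A ω) * (S * A ω - A ω * S)).trace ∂P = 0 := by
    rw [← hA.integral_fderiv_commutator_eq_zero_of_skew hu.contDiff hS]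
    refine integral_congr_ae (.of_forall fun ω ↦ (hu.fderiv_apply _ _ ?_).symm)
    rw [IsHermitian, conjTranspose_sub, conjTranspose_mul, conjTranspose_mul, hS,
      (hA.isHermitian ω).eq]
    noncomm_ring
  have int (S : Matrix ι ι ℂ) : Integrable (fun ω ↦ (G (A ω) * (S * A ω - A ω * S)).trace) P :=
    hA.integrable_comp (ψ := fun M ↦ (G M * (S * M - M * S)).trace) <| by
      have := hu.continuous
      fun_prop
  -- Both Cartesian components of `B` are complex multiples of skew-Hermitian matrices.
  set S : Matrix ι ι ℂ := Complex.I • (realPart B : Matrix ι ι ℂ)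
  set T : Matrix ι ι ℂ := Complex.I • (imaginaryPart B : Matrix ι ι ℂ)
  have hSkew (H : selfAdjoint (Matrix ι ι ℂ)) :
      (Complex.I • (H : Matrix ι ι ℂ))ᴴ = -(Complex.I • (H : Matrix ι ι ℂ)) := by
    rw [conjTranspose_smul, ← star_eq_conjTranspose, H.2.star_eq]
    simp
  have hB : B = -Complex.I • S + T := by
    rw [smul_smul, neg_mul, Complex.I_mul_I, neg_neg, one_smul, realPart_add_I_smul_imaginaryPart]
  have hsplit ω : (G (A ω) * (B * A ω - A ω * B)).trace =
      -Complex.I * (G (A ω) * (S * A ω - A ω * S)).trace +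
        (G (A ω) * (T * A ω - A ω * T)).trace := by
    conv_lhs => rw [hB]
    simp only [add_mul, mul_add, mul_sub, smul_mul_assoc, mul_smul_comm, trace_add, trace_sub,
      trace_smul, smul_eq_mul]
    ring
  simp only [hsplit]
  rw [integral_add ((int S).const_mul _) (int T), integral_const_mul, skew (hSkew _),
    skew (hSkew _), mul_zero, add_zero]

end HasTraceGradient

theorem sum_trace_mul_single_smul_single (A N : Matrix ι ι ℂ) :
    ∑ a, ∑ b, (N * single b a 1 * A).trace • single a b (1 : ℂ) = A * N := by
  conv_rhs => rw [matrix_eq_sum_single (A * N)]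
  refine Finset.sum_congr rfl fun a _ ↦ Finset.sum_congr rfl fun b _ ↦ ?_
  rw [mul_assoc, trace_mul_comm, mul_assoc, trace_single_mul, smul_single]
  simp

theorem sum_trace_mul_single_mul_commutator_single (A N : Matrix ι ι ℂ) :
    ∑ a, ∑ b, (N * single b a 1 * (single a b (1 : ℂ) * A - A * single a b (1 : ℂ))).trace =
      Fintype.card ι * (N * A).trace - N.trace * A.trace := by
  have h a b : (N * single b a 1 * (single a b (1 : ℂ) * A - A * single a b (1 : ℂ))).trace =
      (A * N) b b - N b b * A a a := by
    rw [mul_sub, trace_sub, ← mul_assoc, mul_assoc N, single_mul_single_same,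
      mul_assoc, mul_assoc N, ← mul_assoc _ A, single_mul_mul_single, trace_mul_comm,
      mul_assoc, trace_single_mul, trace_mul_single]
    simp
  simp only [h, Finset.sum_sub_distrib, Finset.sum_const, Finset.card_univ, nsmul_eq_mul,
    ← Finset.sum_mul, ← Finset.mul_sum]
  rw [trace_mul_comm]
  rfl

theorem HasTraceGradient.integral_mul_trace_mul [IsFiniteMeasure P]
    {u : Matrix ι ι ℂ → ℂ} {G : Matrix ι ι ℂ → Matrix ι ι ℂ} (hu : HasTraceGradient u G)
    {A : Ω → Matrix ι ι ℂ} (hA : IsUnitarilyInvariant P A) (N : Matrix ι ι ℂ) :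
    ∫ ω, u (A ω) * (Fintype.card ι * (N * A ω).trace - N.trace * (A ω).trace) ∂P =
      ∫ ω, (G (A ω) * (A ω * (A ω * N) - A ω * N * A ω)).trace ∂P := by
  have huc := hu.contDiff.continuous
  have hGc := hu.continuous
  set g : ι → ι → Matrix ι ι ℂ → ℂ := fun a b M ↦
    ((u M • (N * single b a (1 : ℂ)) + (N * single b a 1 * M).trace • G M) *
      (single a b (1 : ℂ) * M - M * single a b (1 : ℂ))).trace with hg
  have hgc a b : Continuous (g a b) := by
    simp only [hg]
    fun_prop
  have hg0 a b : ∫ ω, g a b (A ω) ∂P = 0 :=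
    (hu.mul (hasTraceGradient_trace_mul _)).integral_trace_mul_commutator_eq_zero hA _
  have hsum M : ∑ a, ∑ b, g a b M =
      u M * (Fintype.card ι * (N * M).trace - N.trace * M.trace) -
        (G M * (M * (M * N) - M * N * M)).trace := by
    have hneg : (G M * (M * (M * N) - M * N * M)).trace =
        -(G M * (M * N * M - M * (M * N))).trace := by
      rw [← trace_neg, ← mul_neg, neg_sub]
    rw [← sum_trace_mul_single_mul_commutator_single, hneg, sub_neg_eq_add,
      ← sum_trace_mul_single_smul_single M N]
    simp only [hg, add_mul, trace_add, Finset.sum_add_distrib, smul_mul_assoc, trace_smul,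
      smul_eq_mul, Finset.mul_sum, Finset.sum_mul, mul_smul_comm, trace_sum, mul_sub, trace_sub,
      Finset.sum_sub_distrib]
    abel
  have hzero : ∫ ω, ∑ a, ∑ b, g a b (A ω) ∂P = 0 := by
    rw [integral_finsetSum _ fun a _ ↦ integrable_finsetSum _ fun b _ ↦
      hA.integrable_comp (hgc a b)]
    refine Finset.sum_eq_zero fun a _ ↦ ?_
    rw [integral_finsetSum _ fun b _ ↦ hA.integrable_comp (hgc a b)]
    exact Finset.sum_eq_zero fun b _ ↦ hg0 a b
  simp only [hsum] at hzero
  rwa [integral_sub, sub_eq_zero] at hzero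
  · exact hA.integrable_comp
      (ψ := fun M ↦ u M * (Fintype.card ι * (N * M).trace - N.trace * M.trace)) (by fun_prop)
  · refine hA.integrable_comp (ψ := fun M ↦ (G M * (M * (M * N) - M * N * M)).trace) ?_
    fun_prop

namespace IsUnitarilyInvariant

variable {A : Ω → Matrix ι ι ℂ}

theorem mul_self (hA : IsUnitarilyInvariant P A) :
    IsUnitarilyInvariant P fun ω ↦ A ω * A ω :=
  hA.comp (Φ := fun B ↦ B * B) (by fun_prop)
    (fun B hB ↦ by simpa only [sq] using hB.pow 2) fun V hV B ↦ by
      have hV' : Vᴴ * V = 1 := mem_unitaryGroup_iff'.1 hV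
      calc V * B * Vᴴ * (V * B * Vᴴ) = V * B * (Vᴴ * V) * B * Vᴴ := by noncomm_ring
        _ = V * (B * B) * Vᴴ := by rw [hV', mul_one, mul_assoc V B B]

variable [IsFiniteMeasure P]

theorem integral_apply_self (hA : IsUnitarilyInvariant P A) (r : ι) :
    Fintype.card ι * ∫ ω, A ω r r ∂P = ∫ ω, (A ω).trace ∂P := by
  have h := (hasTraceGradient_const 1).integral_mul_trace_mul hA (single r r 1)
  have int_apply : Integrable (fun ω ↦ A ω r r) P :=
    hA.integrable_comp (ψ := fun B ↦ B r r) (by fun_prop)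
  have int_trace : Integrable (fun ω ↦ (A ω).trace) P := hA.integrable_comp (by fun_prop)
  simp only [one_mul, trace_single_mul, smul_eq_mul, trace_single_eq_same, zero_mul, trace_zero,
    integral_zero] at h
  rwa [integral_sub (int_apply.const_mul _) int_trace, integral_const_mul, sub_eq_zero] at h

theorem integral_trace_mul_mul_trace_mul (hA : IsUnitarilyInvariant P A)
    (hA_tr : ∀ ω, (A ω).trace = 0) (M N : Matrix ι ι ℂ) :
    Fintype.card ι * ∫ ω, (M * A ω).trace * (N * A ω).trace ∂P =
      ∫ ω, (M * (A ω * A ω) * N).trace ∂P - ∫ ω, (M * A ω * N * A ω).trace ∂P := by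
  have h := (hasTraceGradient_trace_mul M).integral_mul_trace_mul hA N
  simp only [hA_tr, mul_zero, sub_zero, mul_sub, trace_sub, mul_left_comm _ (Fintype.card ι : ℂ)]
    at h
  rw [integral_const_mul] at h
  simp only [h, Matrix.mul_assoc]
  rw [integral_sub]
  · exact hA.integrable_comp (ψ := fun B ↦ (M * (B * (B * N))).trace) (by fun_prop)
  · exact hA.integrable_comp (ψ := fun B ↦ (M * (B * (N * B))).trace) (by fun_prop)

theorem integral_apply_mul_apply_swap (hA : IsUnitarilyInvariant P A)
    (hA_tr : ∀ ω, (A ω).trace = 0) (r s : ι) :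
    ((Fintype.card ι : ℂ) ^ 2 - 1) * ∫ ω, A ω r s * A ω s r ∂P =
      ∫ ω, (A ω * A ω).trace ∂P - if r = s then ∫ ω, (A ω * A ω) r r ∂P else 0 := by
  have hoff := hA.integral_trace_mul_mul_trace_mul hA_tr (single s r 1) (single r s 1)
  have hdiag := hA.integral_trace_mul_mul_trace_mul hA_tr (single r r 1) (single s s 1)
  have hsq := hA.mul_self.integral_apply_self r
  simp only [single_mul_mul_single, trace_single_mul, smul_eq_mul, trace_single_eq_same, one_mul,
    mul_one] at hoff hdiag
  split_ifs with hrs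
  · subst hrs
    simp only [trace_single_eq_same] at hdiag
    linear_combination (Fintype.card ι : ℂ) * hoff - hdiag + hsq
  · simp only [trace_single_eq_of_ne _ _ _ hrs, integral_zero] at hdiag
    linear_combination (Fintype.card ι : ℂ) * hoff - hdiag + hsq

theorem integral_norm_sq_apply_le (hA : IsUnitarilyInvariant P A)
    (hA_tr : ∀ ω, (A ω).trace = 0) (r s : ι) :
    ((Fintype.card ι : ℝ) ^ 2 - 1) * ∫ ω, ‖A ω r s‖ ^ 2 ∂P ≤ ∫ ω, (A ω * A ω).trace.re ∂P := by
  have hentry ω (a b : ι) := apply_mul_apply_swap_of_isHermitian (hA.isHermitian ω) a b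
  have hdiag : 0 ≤ ∫ ω, ((A ω * A ω) r r).re ∂P := integral_nonneg fun ω ↦ by
    simp only [mul_apply, hentry, ← Complex.ofReal_sum, Complex.ofReal_re]
    positivity
  have h := congr_arg Complex.re (hA.integral_apply_mul_apply_swap hA_tr r s)
  have hcast : (Fintype.card ι : ℂ) ^ 2 - 1 = ((Fintype.card ι ^ 2 - 1 : ℝ) : ℂ) := by
    push_cast
    rfl
  simp only [hentry, integral_complex_ofReal] at h
  rw [hcast, ← Complex.ofReal_mul, Complex.ofReal_re, Complex.sub_re,
    ← hA.integral_re_comp (ψ := fun B ↦ (B * B).trace) (by fun_prop), apply_ite Complex.re,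
    ← hA.integral_re_comp (ψ := fun B ↦ (B * B) r r) (by fun_prop)] at h
  rw [h]
  split_ifs
  · exact sub_le_self _ hdiag
  · simp

end IsUnitarilyInvariant

end UnitarilyInvariantMatrices

theorem integral_norm_sum_mul_sq_le {Ω κ : Type*} [MeasurableSpace Ω] {P : Measure Ω} [Fintype κ]
    {w : κ → ℂ} {Z : κ → Ω → ℂ} (hZ : ∀ k, MemLp (Z k) 2 P) {m : ℝ}
    (hm : ∀ k, ∫ ω, ‖Z k ω‖ ^ 2 ∂P ≤ m) :
    ∫ ω, ‖∑ k, w k * Z k ω‖ ^ 2 ∂P ≤ (∑ k, ‖w k‖) ^ 2 * m := by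
  have hint k : Integrable (fun ω ↦ ‖Z k ω‖ ^ 2) P := (hZ k).integrable_norm_pow two_ne_zero
  have pointwise ω :
      ‖∑ k, w k * Z k ω‖ ^ 2 ≤ (∑ k, ‖w k‖) * ∑ k, ‖w k‖ * ‖Z k ω‖ ^ 2 :=
    calc ‖∑ k, w k * Z k ω‖ ^ 2 ≤ (∑ k, ‖w k‖ * ‖Z k ω‖) ^ 2 := by
          gcongr
          exact (norm_sum_le _ _).trans_eq (by simp only [norm_mul])
      _ ≤ (∑ k, ‖w k‖) * ∑ k, ‖w k‖ * ‖Z k ω‖ ^ 2 :=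
          Finset.sum_sq_le_sum_mul_sum_of_sq_le_mul _ (fun _ _ ↦ norm_nonneg _)
            (fun _ _ ↦ by positivity) fun _ _ ↦ by rw [mul_pow, sq ‖w _‖, mul_assoc]
  calc ∫ ω, ‖∑ k, w k * Z k ω‖ ^ 2 ∂P
      ≤ ∫ ω, (∑ k, ‖w k‖) * ∑ k, ‖w k‖ * ‖Z k ω‖ ^ 2 ∂P :=
        integral_mono_of_nonneg (.of_forall fun _ ↦ by positivity)
          ((integrable_finsetSum _ fun k _ ↦ (hint k).const_mul _).const_mul _)
          (.of_forall pointwise)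
    _ = (∑ k, ‖w k‖) * ∑ k, ‖w k‖ * ∫ ω, ‖Z k ω‖ ^ 2 ∂P := by
        rw [integral_const_mul, integral_finsetSum _ fun k _ ↦ (hint k).const_mul _]
        simp only [integral_const_mul]
    _ ≤ (∑ k, ‖w k‖) * ∑ k, ‖w k‖ * m := by
        gcongr with k
        exact hm k
    _ = (∑ k, ‖w k‖) ^ 2 * m := by rw [← Finset.sum_mul]; ring

theorem integral_norm_trace_mul_mul_mul_sq_le {Ω ι : Type*} [MeasurableSpace Ω] {P : Measure Ω}
    [Fintype ι] [Nonempty ι] {M N : Matrix ι ι ℂ} {K L : ℝ} (hM : ∑ i, ∑ j, ‖M i j‖ ≤ K)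
    (hN : ∑ i, ∑ j, ‖N i j‖ ≤ L) {X Y : Ω → Matrix ι ι ℂ}
    (hXY : ∀ i j k l, MemLp (fun ω ↦ X ω i j * Y ω k l) 2 P) {m : ℝ}
    (hm : ∀ i j k l, ∫ ω, ‖X ω i j * Y ω k l‖ ^ 2 ∂P ≤ m) :
    ∫ ω, ‖(M * X ω * N * Y ω).trace‖ ^ 2 ∂P ≤ (K * L) ^ 2 * m := by
  have htrace (B C : Matrix ι ι ℂ) : (M * B * N * C).trace =
      ∑ k : (ι × ι) × ι × ι, M k.1.1 k.1.2 * N k.2.1 k.2.2 * (B k.1.2 k.2.1 * C k.2.2 k.1.1) := by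
    simp only [Fintype.sum_prod_type, Matrix.mul_assoc, trace, diag_apply, mul_apply,
      Finset.mul_sum]
    simp only [mul_left_comm, mul_assoc]
  have hnorm : (∑ i, ∑ j, ‖M i j‖) * ∑ i, ∑ j, ‖N i j‖ =
      ∑ k : (ι × ι) × ι × ι, ‖M k.1.1 k.1.2 * N k.2.1 k.2.2‖ := by
    simp only [norm_mul, ← Fintype.sum_prod_type', Fintype.sum_mul_sum]
  have hK : 0 ≤ K := le_trans (by positivity) hM
  have hm0 : 0 ≤ m := (integral_nonneg fun _ ↦ by positivity).trans
    (hm (Classical.arbitrary ι) (Classical.arbitrary ι) (Classical.arbitrary ι)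
      (Classical.arbitrary ι))
  calc ∫ ω, ‖(M * X ω * N * Y ω).trace‖ ^ 2 ∂P
      ≤ ((∑ i, ∑ j, ‖M i j‖) * ∑ i, ∑ j, ‖N i j‖) ^ 2 * m := by
        simp only [htrace, hnorm]
        exact integral_norm_sum_mul_sq_le (fun k ↦ hXY ..) fun k ↦ hm ..
    _ ≤ (K * L) ^ 2 * m := by gcongr

section TraceStatistics

open scoped Matrix.Norms.L2Operator

theorem im_trace_mul_eq_zero {ι : Type*} [Fintype ι] {B C : Matrix ι ι ℂ} (hB : B.IsHermitian)
    (hC : C.IsHermitian) : (B * C).trace.im = 0 := by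
  rw [← Complex.conj_eq_iff_im, starRingEnd_apply, ← trace_conjTranspose, conjTranspose_mul,
    hB.eq, hC.eq, trace_mul_comm]

theorem re_trace_conjTranspose_mul_self {ι : Type*} [Fintype ι] (B : Matrix ι ι ℂ) :
    (Bᴴ * B).trace.re = ∑ j, ‖WithLp.toLp 2 (B.col j)‖ ^ 2 := by
  simp [trace, mul_apply, EuclideanSpace.norm_sq_eq, Complex.sq_norm, Complex.normSq_apply]

variable {ι κ : Type*} [Fintype ι] [DecidableEq ι]

/-- The vector of the linear statistics `Re tr (M i * A)` of a matrix `A`. -/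
noncomputable def traceVector (M : κ → Matrix ι ι ℂ) [Fintype κ] :
    Matrix ι ι ℂ →L[ℝ] EuclideanSpace ℝ κ :=
  LinearMap.toContinuousLinearMap <| (WithLp.linearEquiv 2 ℝ (κ → ℝ)).symm.toLinearMap ∘ₗ
    LinearMap.pi fun i ↦ Complex.reLm ∘ₗ traceLinearMap ι ℝ ℂ ∘ₗ LinearMap.mulLeft ℝ (M i)

/-- A Stein kernel of the random vector `traceVector M A`, for `A` unitarily invariant with trace
`0`. -/
noncomputable def traceSteinKernel (M : κ → Matrix ι ι ℂ) [Fintype κ] (A : Matrix ι ι ℂ) (i : κ) :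
    EuclideanSpace ℝ κ :=
  (Fintype.card ι : ℝ)⁻¹ • traceVector M (A * (A * M i) - A * M i * A)

variable [Fintype κ] {M : κ → Matrix ι ι ℂ}

@[simp]
theorem traceVector_apply (A : Matrix ι ι ℂ) (i : κ) : traceVector M A i = (M i * A).trace.re :=
  rfl

theorem clm_apply_traceVector [DecidableEq κ] (L : EuclideanSpace ℝ κ →L[ℝ] ℝ)
    (C : Matrix ι ι ℂ) :
    L (traceVector M C) =
      ((∑ i, (L (EuclideanSpace.single i 1) : ℂ) • M i) * C).trace.re := by
  have hL : L (traceVector M C) = ∑ i, traceVector M C i * L (EuclideanSpace.single i 1) := by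
    conv_lhs => rw [← (EuclideanSpace.basisFun κ ℝ).sum_repr (traceVector M C)]
    simp
  simp [hL, Finset.sum_mul, trace_sum, mul_comm]

theorem hasTraceGradient_comp_traceVector [DecidableEq κ] (hM : ∀ i, (M i).IsHermitian)
    {u : EuclideanSpace ℝ κ → ℝ} (hu : ContDiff ℝ 1 u) :
    HasTraceGradient (fun A ↦ (u (traceVector M A) : ℂ)) fun A ↦
      ∑ i, (fderiv ℝ u (traceVector M A) (EuclideanSpace.single i 1) : ℂ) • M i where
  contDiff := Complex.ofRealCLM.contDiff.comp (hu.comp (traceVector M).contDiff)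
  continuous := by
    have := (hu.continuous_fderiv one_ne_zero).comp (traceVector M).continuous
    fun_prop
  fderiv_apply A C hC := by
    have hderiv : HasFDerivAt (fun A ↦ (u (traceVector M A) : ℂ))
        (Complex.ofRealCLM ∘SL fderiv ℝ u (traceVector M A) ∘SL traceVector M) A :=
      Complex.ofRealCLM.hasFDerivAt.comp A
        ((hu.differentiable one_ne_zero _).hasFDerivAt.comp A (traceVector M).hasFDerivAt)
    have hG : (∑ i, (fderiv ℝ u (traceVector M A) (EuclideanSpace.single i 1) : ℂ) •
        M i).IsHermitian := by
      rw [IsHermitian, conjTranspose_sum]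
      simp [(hM _).eq]
    rw [hderiv.fderiv]
    refine Complex.ext ?_ (im_trace_mul_eq_zero hG hC).symm
    exact clm_apply_traceVector _ C

variable {Ω : Type*} [MeasurableSpace Ω] {P : Measure Ω} {A : Ω → Matrix ι ι ℂ}

theorem IsUnitarilyInvariant.integral_re_trace_mul_mul_comp_traceVector [IsFiniteMeasure P]
    (hA : IsUnitarilyInvariant P A) (hA_tr : ∀ ω, (A ω).trace = 0)
    (hM : ∀ i, (M i).IsHermitian) {u : EuclideanSpace ℝ κ → ℝ} (hu : ContDiff ℝ 1 u)
    (N : Matrix ι ι ℂ) :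
    Fintype.card ι * ∫ ω, (N * A ω).trace.re * u (traceVector M (A ω)) ∂P =
      ∫ ω, fderiv ℝ u (traceVector M (A ω))
        (traceVector M (A ω * (A ω * N) - A ω * N * A ω)) ∂P := by
  classical
  let G (B : Matrix ι ι ℂ) : Matrix ι ι ℂ :=
    ∑ i, (fderiv ℝ u (traceVector M B) (EuclideanSpace.single i 1) : ℂ) • M i
  let ψ (B : Matrix ι ι ℂ) : ℂ :=
    u (traceVector M B) * (Fintype.card ι * (N * B).trace - N.trace * B.trace)
  let χ (B : Matrix ι ι ℂ) : ℂ := (G B * (B * (B * N) - B * N * B)).trace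
  have hG : HasTraceGradient (fun B ↦ (u (traceVector M B) : ℂ)) G :=
    hasTraceGradient_comp_traceVector hM hu
  have hψ : Continuous ψ := hG.contDiff.continuous.mul (by fun_prop)
  have hχ : Continuous χ := by
    have := hG.continuous
    fun_prop
  calc Fintype.card ι * ∫ ω, (N * A ω).trace.re * u (traceVector M (A ω)) ∂P
      = ∫ ω, (ψ (A ω)).re ∂P := by
        rw [← integral_const_mul]
        simp only [ψ, hA_tr, mul_zero, sub_zero, Complex.re_ofReal_mul, ← Complex.ofReal_natCast,
          mul_left_comm, mul_comm (u _)]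
    _ = (∫ ω, ψ (A ω) ∂P).re := hA.integral_re_comp hψ
    _ = (∫ ω, χ (A ω) ∂P).re := congr_arg _ (hG.integral_mul_trace_mul hA N)
    _ = ∫ ω, (χ (A ω)).re ∂P := (hA.integral_re_comp hχ).symm
    _ = _ := by simp only [χ, G, ← clm_apply_traceVector]

theorem continuous_traceSteinKernel (i : κ) : Continuous fun A ↦ traceSteinKernel M A i := by
  unfold traceSteinKernel
  fun_prop

theorem isSteinKernel_traceSteinKernel [IsFiniteMeasure P] [Nonempty ι]
    (hM : ∀ i, (M i).IsHermitian) (hA : IsUnitarilyInvariant P A)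
    (hA_tr : ∀ ω, (A ω).trace = 0) :
    IsSteinKernel (EuclideanSpace.basisFun κ ℝ) P (fun ω ↦ traceVector M (A ω))
      fun ω ↦ traceSteinKernel M (A ω) where
  memLp_two := hA.memLp_comp (traceVector M).continuous 2
  memLp_two_kernel i := hA.memLp_comp (continuous_traceSteinKernel i) 2
  integral_inner_mul {u _} hu _ i := by
    have h := hA.integral_re_trace_mul_mul_comp_traceVector hA_tr hM hu (M i)
    simp only [traceSteinKernel, map_smul, smul_eq_mul, integral_const_mul, ← h,
      ← (EuclideanSpace.basisFun κ ℝ).repr_apply_apply, EuclideanSpace.basisFun_repr,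
      traceVector_apply]
    field_simp

theorem norm_apply_le_l2_opNorm {m n : Type*} [Fintype m] [Fintype n] [DecidableEq n]
    (B : Matrix m n ℂ) (i : m) (j : n) : ‖B i j‖ ≤ ‖B‖ := by
  simpa using (PiLp.norm_apply_le _ i).trans (B.l2_opNorm_mulVec (EuclideanSpace.single j 1))

theorem re_trace_conjTranspose_mul_self_mul_le (B C : Matrix ι ι ℂ) :
    ((B * C)ᴴ * (B * C)).trace.re ≤ ‖B‖ ^ 2 * (Cᴴ * C).trace.re := by
  rw [re_trace_conjTranspose_mul_self, re_trace_conjTranspose_mul_self, Finset.mul_sum]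
  refine Finset.sum_le_sum fun j _ ↦ ?_
  rw [← mul_pow]
  gcongr
  exact B.l2_opNorm_mulVec (WithLp.toLp 2 (C.col j))

theorem re_trace_conjTranspose_mul_self_le (B : Matrix ι ι ℂ) :
    (Bᴴ * B).trace.re ≤ ‖B‖ ^ 2 * Fintype.card ι := by
  simpa using re_trace_conjTranspose_mul_self_mul_le B 1

theorem re_trace_sq_mul_self_sub_smul_one_le {B : Matrix ι ι ℂ} (hB : B.IsHermitian) {c : ℝ}
    (hc : (B * B).trace = (c * Fintype.card ι : ℝ)) :
    ((B * B - (c : ℂ) • 1) * (B * B - (c : ℂ) • 1)).trace.re ≤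
      ‖B‖ ^ 2 * (c * Fintype.card ι) := by
  have hexpand : ((B * B - (c : ℂ) • 1) * (B * B - (c : ℂ) • 1)).trace =
      (B * B * (B * B)).trace - (c ^ 2 * Fintype.card ι : ℝ) := by
    simp only [sub_mul, mul_sub, trace_sub, smul_mul_assoc, mul_smul_comm, one_mul, mul_one,
      trace_smul, hc, trace_one, smul_eq_mul]
    push_cast
    ring
  have hfour := re_trace_conjTranspose_mul_self_mul_le B B
  rw [conjTranspose_mul, hB.eq, hc, Complex.ofReal_re] at hfour
  rw [hexpand, Complex.sub_re, Complex.ofReal_re]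
  exact (sub_le_self _ (by positivity)).trans hfour

namespace IsUnitarilyInvariant

theorem integral_norm_sq_apply_le_one [IsProbabilityMeasure P] [Nontrivial ι]
    (hA : IsUnitarilyInvariant P A) (hA_tr : ∀ ω, (A ω).trace = 0)
    (hA_sq : ∀ ω, (A ω * A ω).trace = (Fintype.card ι : ℂ) ^ 2 - 1) (r s : ι) :
    ∫ ω, ‖A ω r s‖ ^ 2 ∂P ≤ 1 := by
  have hcard : (1 : ℝ) < Fintype.card ι := mod_cast Fintype.one_lt_card
  have h := hA.integral_norm_sq_apply_le hA_tr r s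
  have hre : ((Fintype.card ι : ℂ) ^ 2 - 1).re = (Fintype.card ι : ℝ) ^ 2 - 1 := by norm_cast
  simp only [hA_sq, hre, integral_const, probReal_univ, one_smul] at h
  exact le_of_mul_le_mul_left (by rwa [mul_one]) (by nlinarith)

theorem integral_norm_apply_mul_apply_sq_le [IsProbabilityMeasure P] [Nontrivial ι]
    (hA : IsUnitarilyInvariant P A) (hA_tr : ∀ ω, (A ω).trace = 0)
    (hA_sq : ∀ ω, (A ω * A ω).trace = (Fintype.card ι : ℂ) ^ 2 - 1) {b : ℝ}
    (hb : ∀ ω, ‖A ω‖ ≤ b) (i j k l : ι) : ∫ ω, ‖A ω i j * A ω k l‖ ^ 2 ∂P ≤ b ^ 2 :=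
  calc ∫ ω, ‖A ω i j * A ω k l‖ ^ 2 ∂P ≤ ∫ ω, b ^ 2 * ‖A ω k l‖ ^ 2 ∂P := by
        refine integral_mono (hA.integrable_comp (ψ := fun B ↦ ‖B i j * B k l‖ ^ 2) (by fun_prop))
          (hA.integrable_comp (ψ := fun B ↦ b ^ 2 * ‖B k l‖ ^ 2) (by fun_prop)) fun ω ↦ ?_
        simp only [norm_mul, mul_pow]
        gcongr
        exact (norm_apply_le_l2_opNorm _ _ _).trans (hb ω)
    _ ≤ b ^ 2 := by
        rw [integral_const_mul]
        exact mul_le_of_le_one_right (sq_nonneg b)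
          (hA.integral_norm_sq_apply_le_one hA_tr hA_sq k l)

theorem mul_self_sub_smul_one (hA : IsUnitarilyInvariant P A) (c : ℝ) :
    IsUnitarilyInvariant P fun ω ↦ A ω * A ω - (c : ℂ) • 1 :=
  hA.mul_self.comp (Φ := fun B ↦ B - (c : ℂ) • 1) (by fun_prop)
    (fun B hB ↦ hB.sub (by simp [IsHermitian])) fun V hV B ↦ by
      have hV' : V * Vᴴ = 1 := mem_unitaryGroup_iff.1 hV
      simp [mul_sub, sub_mul, hV']

theorem integral_norm_sq_mul_self_sub_apply_le [IsProbabilityMeasure P] [Nontrivial ι]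
    (hA : IsUnitarilyInvariant P A) {b c : ℝ} (hb : ∀ ω, ‖A ω‖ ≤ b)
    (hA_sq : ∀ ω, (A ω * A ω).trace = (Fintype.card ι : ℂ) ^ 2 - 1)
    (hc : c * Fintype.card ι = (Fintype.card ι : ℝ) ^ 2 - 1) (r s : ι) :
    ∫ ω, ‖(A ω * A ω - (c : ℂ) • 1) r s‖ ^ 2 ∂P ≤ b ^ 2 := by
  have hcard : (1 : ℝ) < Fintype.card ι := mod_cast Fintype.one_lt_card
  have hc' : (Fintype.card ι : ℂ) ^ 2 - 1 = ((c * Fintype.card ι : ℝ) : ℂ) := by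
    rw [hc]
    push_cast
    rfl
  have hc0 : 0 < c * Fintype.card ι := by
    rw [hc]
    nlinarith
  simp only [hc'] at hA_sq
  have trace_sq_le ω : ((A ω * A ω - (c : ℂ) • 1) * (A ω * A ω - (c : ℂ) • 1)).trace.re ≤
      b ^ 2 * (c * Fintype.card ι) := by
    refine (re_trace_sq_mul_self_sub_smul_one_le (hA.isHermitian ω) (hA_sq ω)).trans ?_
    gcongr
    exact hb ω
  have hY := hA.mul_self_sub_smul_one c
  have h := (hY.integral_norm_sq_apply_le (fun ω ↦ by simp [hA_sq]) r s).trans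
    (integral_mono (hY.integrable_comp (ψ := fun B ↦ (B * B).trace.re)
      (by fun_prop)) (integrable_const _) trace_sq_le)
  rw [← hc, integral_const, probReal_univ, one_smul, mul_comm] at h
  exact le_of_mul_le_mul_right h hc0

theorem integral_norm_trace_mul_self_sub_sq_le [IsProbabilityMeasure P] [Nontrivial ι]
    (hA : IsUnitarilyInvariant P A)
    (hA_sq : ∀ ω, (A ω * A ω).trace = (Fintype.card ι : ℂ) ^ 2 - 1) {b c L : ℝ}
    (hb : ∀ ω, ‖A ω‖ ≤ b) (hc : c * Fintype.card ι = (Fintype.card ι : ℝ) ^ 2 - 1)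
    {N N' : Matrix ι ι ℂ} (hN : ∑ r, ∑ s, ‖N r s‖ ≤ L) (hN' : ∑ r, ∑ s, ‖N' r s‖ ≤ L) :
    ∫ ω, ‖(N * (A ω * A ω - (c : ℂ) • 1) * N' * 1).trace‖ ^ 2 ∂P ≤ L ^ 4 * b ^ 2 := by
  refine (integral_norm_trace_mul_mul_mul_sq_le hN hN' (X := fun ω ↦ A ω * A ω - (c : ℂ) • 1)
    (Y := fun _ ↦ 1) (m := b ^ 2) (fun r s k l ↦ ?_) fun r s k l ↦ ?_).trans_eq (by ring)
  · exact hA.memLp_comp (ψ := fun B ↦ (B * B - (c : ℂ) • 1) r s * (1 : Matrix ι ι ℂ) k l)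
      (by fun_prop) 2
  · rw [one_apply]
    split_ifs
    · simpa using hA.integral_norm_sq_mul_self_sub_apply_le hb hA_sq hc r s
    · simpa using sq_nonneg b

theorem integral_norm_trace_mul_mul_mul_self_sq_le [IsProbabilityMeasure P] [Nontrivial ι]
    (hA : IsUnitarilyInvariant P A) (hA_tr : ∀ ω, (A ω).trace = 0)
    (hA_sq : ∀ ω, (A ω * A ω).trace = (Fintype.card ι : ℂ) ^ 2 - 1) {b L : ℝ}
    (hb : ∀ ω, ‖A ω‖ ≤ b) {N N' : Matrix ι ι ℂ} (hN : ∑ r, ∑ s, ‖N r s‖ ≤ L)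
    (hN' : ∑ r, ∑ s, ‖N' r s‖ ≤ L) :
    ∫ ω, ‖(N * A ω * N' * A ω).trace‖ ^ 2 ∂P ≤ L ^ 4 * b ^ 2 :=
  (integral_norm_trace_mul_mul_mul_sq_le hN hN'
    (fun r s k l ↦ hA.memLp_comp (ψ := fun B ↦ B r s * B k l) (by fun_prop) 2)
    (hA.integral_norm_apply_mul_apply_sq_le hA_tr hA_sq hb)).trans_eq (by ring)

end IsUnitarilyInvariant

theorem traceSteinKernel_apply_sub (B : Matrix ι ι ℂ) (c : ℝ) (i j : κ) :
    traceSteinKernel M B i j - c / Fintype.card ι * (M j * M i).trace.re =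
      (Fintype.card ι : ℝ)⁻¹ * ((M j * (B * B - (c : ℂ) • 1) * M i * 1).trace.re -
        (M j * B * M i * B).trace.re) := by
  have hexpand : (M j * (B * (B * M i) - B * M i * B)).trace.re =
      (M j * (B * B - (c : ℂ) • 1) * M i * 1).trace.re + c * (M j * M i).trace.re -
        (M j * B * M i * B).trace.re := by
    simp [mul_sub, sub_mul, Matrix.mul_assoc]
  rw [traceSteinKernel, PiLp.smul_apply, traceVector_apply, hexpand, smul_eq_mul]
  ring

theorem sub_sub_sq_le (x y z : ℝ) : (x - y - z) ^ 2 ≤ 3 * (x ^ 2 + y ^ 2 + z ^ 2) := by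
  nlinarith [sq_nonneg (x + y), sq_nonneg (x + z), sq_nonneg (y - z)]

theorem sq_traceSteinKernel_apply_sub_le [DecidableEq κ] [Nonempty ι] {c : ℝ}
    (hc : c * Fintype.card ι = (Fintype.card ι : ℝ) ^ 2 - 1)
    (hM : ∀ i j, (M i * M j).trace = if i = j then 1 else 0) (B : Matrix ι ι ℂ) (i j : κ) :
    (traceSteinKernel M B i j - if i = j then 1 else 0) ^ 2 ≤ 3 * (Fintype.card ι : ℝ)⁻¹ ^ 2 *
      (‖(M j * (B * B - (c : ℂ) • 1) * M i * 1).trace‖ ^ 2 + ‖(M j * B * M i * B).trace‖ ^ 2 +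
        (Fintype.card ι : ℝ)⁻¹ ^ 2) := by
  have h := traceSteinKernel_apply_sub (M := M) B c i j
  have hδ : (M j * M i).trace.re = if i = j then 1 else 0 := by
    rw [hM, apply_ite Complex.re]
    simp only [eq_comm, Complex.one_re, Complex.zero_re]
  rw [hδ] at h
  set x := (M j * (B * B - (c : ℂ) • 1) * M i * 1).trace
  set y := (M j * B * M i * B).trace
  have hx : x.re ^ 2 ≤ ‖x‖ ^ 2 := sq_le_sq' (neg_le_of_abs_le (Complex.abs_re_le_norm x))
    (Complex.re_le_norm x)
  have hy : y.re ^ 2 ≤ ‖y‖ ^ 2 := sq_le_sq' (neg_le_of_abs_le (Complex.abs_re_le_norm y))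
    (Complex.re_le_norm y)
  have hcard : (Fintype.card ι : ℝ) ≠ 0 := by simp
  generalize hδ' : (if i = j then 1 else 0 : ℝ) = δ at h ⊢
  have hδ1 : δ ^ 2 ≤ 1 := by
    rw [← hδ']
    split_ifs <;> norm_num
  have herr : traceSteinKernel M B i j - δ =
      (Fintype.card ι : ℝ)⁻¹ * (x.re - y.re - δ * (Fintype.card ι : ℝ)⁻¹) := by
    have hc' : c / Fintype.card ι = 1 - (Fintype.card ι : ℝ)⁻¹ ^ 2 := by
      field_simp
      exact hc
    rw [hc'] at h
    linear_combination h
  rw [herr, mul_pow, mul_comm (3 : ℝ), mul_assoc]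
  gcongr
  refine (sub_sub_sq_le _ _ _).trans ?_
  rw [mul_pow δ]
  gcongr
  exact mul_le_of_le_one_left (sq_nonneg _) hδ1

theorem IsUnitarilyInvariant.integrable_norm_trace_mul_mul_mul_sq [IsFiniteMeasure P]
    (hA : IsUnitarilyInvariant P A) {N N' : Matrix ι ι ℂ} {X Y : Matrix ι ι ℂ → Matrix ι ι ℂ}
    (hX : Continuous X) (hY : Continuous Y) :
    Integrable (fun ω ↦ ‖(N * X (A ω) * N' * Y (A ω)).trace‖ ^ 2) P :=
  hA.integrable_comp (((((continuous_const.matrix_mul hX).matrix_mul continuous_const).matrix_mul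
    hY).matrix_trace).norm.pow 2)

theorem IsUnitarilyInvariant.integral_sq_traceSteinKernel_apply_sub_le [DecidableEq κ]
    [IsProbabilityMeasure P] [Nontrivial ι]
    (hA : IsUnitarilyInvariant P A) (hA_tr : ∀ ω, (A ω).trace = 0)
    (hA_sq : ∀ ω, (A ω * A ω).trace = (Fintype.card ι : ℂ) ^ 2 - 1) {b L : ℝ}
    (hb : ∀ ω, ‖A ω‖ ≤ b) (hM_tr : ∀ i j, (M i * M j).trace = if i = j then 1 else 0)
    (hM_norm : ∀ i, ∑ r, ∑ s, ‖M i r s‖ ≤ L) (i j : κ) :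
    ∫ ω, (traceSteinKernel M (A ω) i j - if i = j then 1 else 0) ^ 2 ∂P ≤
      3 * (Fintype.card ι : ℝ)⁻¹ ^ 2 * (L ^ 4 * b ^ 2 + L ^ 4 * b ^ 2 +
        (Fintype.card ι : ℝ)⁻¹ ^ 2) := by
  obtain ⟨c, hc⟩ : ∃ c : ℝ, c * Fintype.card ι = (Fintype.card ι : ℝ) ^ 2 - 1 :=
    ⟨_, div_mul_cancel₀ _ (by simp)⟩
  obtain ⟨α, hα⟩ : ∃ α : Ω → ℝ,
    ∀ ω, α ω = ‖(M j * (A ω * A ω - (c : ℂ) • 1) * M i * 1).trace‖ ^ 2 := ⟨_, fun _ ↦ rfl⟩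
  obtain ⟨β, hβ⟩ : ∃ β : Ω → ℝ, ∀ ω, β ω = ‖(M j * A ω * M i * A ω).trace‖ ^ 2 :=
    ⟨_, fun _ ↦ rfl⟩
  have hα_int : Integrable α P := by
    rw [funext hα]
    exact hA.integrable_norm_trace_mul_mul_mul_sq (X := fun B ↦ B * B - (c : ℂ) • 1)
      (Y := fun _ ↦ 1) (by fun_prop) continuous_const
  have hβ_int : Integrable β P := by
    rw [funext hβ]
    exact hA.integrable_norm_trace_mul_mul_mul_sq (X := id) (Y := id) continuous_id continuous_id
  have hα_le : ∫ ω, α ω ∂P ≤ L ^ 4 * b ^ 2 := by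
    rw [funext hα]
    exact hA.integral_norm_trace_mul_self_sub_sq_le hA_sq hb hc (hM_norm j) (hM_norm i)
  have hβ_le : ∫ ω, β ω ∂P ≤ L ^ 4 * b ^ 2 := by
    rw [funext hβ]
    exact hA.integral_norm_trace_mul_mul_mul_self_sq_le hA_tr hA_sq hb (hM_norm j) (hM_norm i)
  have pointwise ω : (traceSteinKernel M (A ω) i j - if i = j then 1 else 0) ^ 2 ≤
      3 * (Fintype.card ι : ℝ)⁻¹ ^ 2 * (α ω + β ω + (Fintype.card ι : ℝ)⁻¹ ^ 2) := by
    rw [hα, hβ]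
    exact sq_traceSteinKernel_apply_sub_le hc hM_tr (A ω) i j
  have hαβ : Integrable (fun ω ↦ α ω + β ω) P := hα_int.add hβ_int
  have hconst : Integrable (fun _ ↦ (Fintype.card ι : ℝ)⁻¹ ^ 2) P := integrable_const _
  calc ∫ ω, (traceSteinKernel M (A ω) i j - if i = j then 1 else 0) ^ 2 ∂P
      ≤ ∫ ω, 3 * (Fintype.card ι : ℝ)⁻¹ ^ 2 * (α ω + β ω + (Fintype.card ι : ℝ)⁻¹ ^ 2) ∂P :=
        integral_mono_of_nonneg (.of_forall fun _ ↦ sq_nonneg _)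
          ((hαβ.add hconst).const_mul _) (.of_forall pointwise)
    _ = 3 * (Fintype.card ι : ℝ)⁻¹ ^ 2 *
        (∫ ω, α ω ∂P + ∫ ω, β ω ∂P + (Fintype.card ι : ℝ)⁻¹ ^ 2) := by
        rw [integral_const_mul, integral_add hαβ hconst, integral_add hα_int hβ_int,
          integral_const, probReal_univ, one_smul]
    _ ≤ _ := by gcongr

theorem IsUnitarilyInvariant.card_sq_sub_one_le [NeZero P] (hA : IsUnitarilyInvariant P A)
    (hA_sq : ∀ ω, (A ω * A ω).trace = (Fintype.card ι : ℂ) ^ 2 - 1) {b : ℝ}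
    (hb : ∀ ω, ‖A ω‖ ≤ b) : (Fintype.card ι : ℝ) ^ 2 - 1 ≤ b ^ 2 * Fintype.card ι := by
  obtain ⟨ω⟩ := P.nonempty_of_neZero
  calc (Fintype.card ι : ℝ) ^ 2 - 1 = ((A ω)ᴴ * A ω).trace.re := by
        rw [(hA.isHermitian ω).eq, hA_sq]
        norm_cast
    _ ≤ ‖A ω‖ ^ 2 * Fintype.card ι := re_trace_conjTranspose_mul_self_le _
    _ ≤ b ^ 2 * Fintype.card ι := by
        gcongr
        exact hb ω

theorem IsUnitarilyInvariant.integral_sq_traceSteinKernel_apply_sub_le_div [DecidableEq κ]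
    [IsProbabilityMeasure P] [Nontrivial ι]
    (hA : IsUnitarilyInvariant P A) (hA_tr : ∀ ω, (A ω).trace = 0)
    (hA_sq : ∀ ω, (A ω * A ω).trace = (Fintype.card ι : ℂ) ^ 2 - 1) {b : ℝ}
    (hb : ∀ ω, ‖A ω‖ ≤ b) (hM_tr : ∀ i j, (M i * M j).trace = if i = j then 1 else 0)
    (hM_norm : ∀ i, ∑ r, ∑ s, ‖M i r s‖ ≤ √2) (i j : κ) :
    ∫ ω, (traceSteinKernel M (A ω) i j - if i = j then 1 else 0) ^ 2 ∂P ≤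
      27 * b ^ 2 / Fintype.card ι ^ 2 := by
  have hsqrt : √2 ^ 4 = (4 : ℝ) := by
    rw [show √2 ^ 4 = (√2 ^ 2) ^ 2 by ring, Real.sq_sqrt zero_le_two]
    norm_num
  have hcard : (2 : ℝ) ≤ Fintype.card ι := mod_cast Fintype.one_lt_card
  have hb_sq : (Fintype.card ι : ℝ)⁻¹ ^ 2 ≤ b ^ 2 := by
    have h := hA.card_sq_sub_one_le hA_sq hb
    rw [inv_pow, inv_le_iff_one_le_mul₀ (by positivity)]
    nlinarith [mul_nonneg (sq_nonneg b) (by linarith : (0 : ℝ) ≤ Fintype.card ι)]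
  calc ∫ ω, (traceSteinKernel M (A ω) i j - if i = j then 1 else 0) ^ 2 ∂P
      ≤ 3 * (Fintype.card ι : ℝ)⁻¹ ^ 2 * (√2 ^ 4 * b ^ 2 + √2 ^ 4 * b ^ 2 +
          (Fintype.card ι : ℝ)⁻¹ ^ 2) :=
        hA.integral_sq_traceSteinKernel_apply_sub_le hA_tr hA_sq hb hM_tr hM_norm i j
    _ ≤ 3 * (Fintype.card ι : ℝ)⁻¹ ^ 2 * (4 * b ^ 2 + 4 * b ^ 2 + b ^ 2) := by
        rw [hsqrt]
        gcongr
    _ = 27 * b ^ 2 / Fintype.card ι ^ 2 := by ring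

theorem IsUnitarilyInvariant.steinDiscrepancy_traceSteinKernel_le [DecidableEq κ]
    [IsProbabilityMeasure P] [Nontrivial ι]
    (hA : IsUnitarilyInvariant P A) (hA_tr : ∀ ω, (A ω).trace = 0)
    (hA_sq : ∀ ω, (A ω * A ω).trace = (Fintype.card ι : ℂ) ^ 2 - 1) {b : ℝ} (hb0 : 0 ≤ b)
    (hb : ∀ ω, ‖A ω‖ ≤ b) (hM_tr : ∀ i j, (M i * M j).trace = if i = j then 1 else 0)
    (hM_norm : ∀ i, ∑ r, ∑ s, ‖M i r s‖ ≤ √2) :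
    steinDiscrepancy (EuclideanSpace.basisFun κ ℝ) P (fun ω ↦ traceSteinKernel M (A ω)) ≤
      6 * Fintype.card κ * b / Fintype.card ι := by
  have hint i j : Integrable
      (fun ω ↦ (traceSteinKernel M (A ω) i j - if i = j then 1 else 0) ^ 2) P :=
    hA.integrable_comp (ψ := fun B ↦ (traceSteinKernel M B i j - if i = j then 1 else 0) ^ 2) (by
      have := continuous_traceSteinKernel (M := M) i
      fun_prop)
  have norm_sq ω i : ‖traceSteinKernel M (A ω) i - EuclideanSpace.basisFun κ ℝ i‖ ^ 2 =
      ∑ j, (traceSteinKernel M (A ω) i j - if i = j then 1 else 0) ^ 2 := by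
    simp [EuclideanSpace.real_norm_sq_eq, eq_comm]
  refine Real.sqrt_le_iff.2 ⟨by positivity, ?_⟩
  calc ∫ ω, ∑ i, ‖traceSteinKernel M (A ω) i - EuclideanSpace.basisFun κ ℝ i‖ ^ 2 ∂P
      = ∑ i, ∑ j, ∫ ω, (traceSteinKernel M (A ω) i j - if i = j then 1 else 0) ^ 2 ∂P := by
        simp only [norm_sq]
        rw [integral_finsetSum _ fun i _ ↦ integrable_finsetSum _ fun j _ ↦ hint i j]
        exact Finset.sum_congr rfl fun i _ ↦ integral_finsetSum _ fun j _ ↦ hint i j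
    _ ≤ ∑ _i : κ, ∑ _j : κ, 27 * b ^ 2 / Fintype.card ι ^ 2 := by
        gcongr with i _ j
        exact hA.integral_sq_traceSteinKernel_apply_sub_le_div hA_tr hA_sq hb hM_tr hM_norm i j
    _ ≤ ∑ _i : κ, ∑ _j : κ, 36 * b ^ 2 / Fintype.card ι ^ 2 := by
        gcongr
        norm_num
    _ = (6 * Fintype.card κ * b / Fintype.card ι) ^ 2 := by
        simp only [Finset.sum_const, Finset.card_univ, nsmul_eq_mul]
        ring

theorem div_le_sqrt_mul_sq_div {x b : ℝ} (hx : 1 < x) (hb : 0 ≤ b) (h : x ^ 2 - 1 ≤ b ^ 2 * x) :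
    b / x ≤ √x * (b ^ 2 / (x ^ 2 - 1)) := by
  have hx0 : 0 < x := one_pos.trans hx
  have hpos : 0 < x ^ 2 - 1 := by nlinarith
  have hle : x ^ 2 - 1 ≤ x * (b * √x) := by
    refine le_of_sq_le_sq ?_ (by positivity)
    rw [mul_pow, mul_pow, Real.sq_sqrt hx0.le, sq (x ^ 2 - 1)]
    exact mul_le_mul (by linarith) h hpos.le (sq_nonneg x)
  rw [← mul_div_assoc, div_le_div_iff₀ hx0 hpos]
  calc b * (x ^ 2 - 1) ≤ b * (x * (b * √x)) := by gcongr
    _ = √x * b ^ 2 * x := by ring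

theorem IsUnitarilyInvariant.abs_integral_traceVector_sub_integral_stdGaussian_le
    [IsProbabilityMeasure P] [Nontrivial ι] [DecidableEq κ]
    (hA : IsUnitarilyInvariant P A) (hA_tr : ∀ ω, (A ω).trace = 0)
    (hA_sq : ∀ ω, (A ω * A ω).trace = (Fintype.card ι : ℂ) ^ 2 - 1) {b : ℝ} (hb0 : 0 ≤ b)
    (hb : ∀ ω, ‖A ω‖ ≤ b) (hM : ∀ i, (M i).IsHermitian)
    (hM_tr : ∀ i j, (M i * M j).trace = if i = j then 1 else 0)
    (hM_norm : ∀ i, ∑ r, ∑ s, ‖M i r s‖ ≤ √2) {f : EuclideanSpace ℝ κ → ℝ} {K : ℝ≥0}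
    (hf : LipschitzWith K f) :
    |∫ ω, f (traceVector M (A ω)) ∂P - ∫ x, f x ∂stdGaussian (EuclideanSpace ℝ κ)| ≤
      K * (6 * Fintype.card κ * √(Fintype.card ι) * (b ^ 2 / (Fintype.card ι ^ 2 - 1))) := by
  refine ((isSteinKernel_traceSteinKernel hM hA
    hA_tr).abs_integral_sub_integral_stdGaussian_le hf).trans ?_
  gcongr
  calc steinDiscrepancy (EuclideanSpace.basisFun κ ℝ) P (fun ω ↦ traceSteinKernel M (A ω))
      ≤ 6 * Fintype.card κ * b / Fintype.card ι :=
        hA.steinDiscrepancy_traceSteinKernel_le hA_tr hA_sq hb0 hb hM_tr hM_norm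
    _ = 6 * Fintype.card κ * (b / Fintype.card ι) := mul_div_assoc ..
    _ ≤ 6 * Fintype.card κ * (√(Fintype.card ι) * (b ^ 2 / (Fintype.card ι ^ 2 - 1))) := by
        gcongr
        exact div_le_sqrt_mul_sq_div (mod_cast Fintype.one_lt_card) hb0
          (hA.card_sq_sub_one_le hA_sq hb)
    _ = 6 * Fintype.card κ * √(Fintype.card ι) * (b ^ 2 / (Fintype.card ι ^ 2 - 1)) :=
        (mul_assoc ..).symm

end TraceStatistics

section EntryLabels

variable {n : ℕ}

theorem trace_add_conjTranspose_mul {ι : Type*} [Fintype ι] (N : Matrix ι ι ℂ)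
    {A : Matrix ι ι ℂ} (hA : A.IsHermitian) :
    ((N + Nᴴ) * A).trace = (2 * (N * A).trace.re : ℝ) := by
  have hconj : (Nᴴ * A).trace = starRingEnd ℂ (N * A).trace := by
    rw [starRingEnd_apply, ← trace_conjTranspose, conjTranspose_mul, hA.eq, trace_mul_comm]
  rw [add_mul, trace_add, hconj, Complex.add_conj]

theorem two_mul_inv_sqrt_two_mul (x : ℝ) : 2 * ((√2)⁻¹ * x) = √2 * x := by
  rw [← mul_assoc, ← div_eq_mul_inv, Real.div_sqrt]

theorem entryValue_smul (c : ℝ) (A : Matrix (Fin n) (Fin n) ℂ) (l : EntryLabel n) :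
    entryValue ((c : ℂ) • A) l = c * entryValue A l := by
  rcases l with j | p | p <;> simp [entryValue, mul_left_comm]

namespace EntryLabel

/-- A matrix with one nonzero entry which, added to its conjugate transpose, gives the Hermitian
matrix representing the functional `entryValue · l`. -/
noncomputable def halfMatrix : EntryLabel n → Matrix (Fin n) (Fin n) ℂ :=
  Sum.elim (fun j ↦ single j j 2⁻¹)
    (Sum.elim (fun p ↦ single p.1.1 p.1.2 ((√2)⁻¹ : ℂ))
      (fun p ↦ single p.1.1 p.1.2 (Complex.I * (√2)⁻¹)))

/-- The Hermitian matrix `M` with `tr (M * A) = entryValue A l` for all Hermitian `A`. -/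
noncomputable def toMatrix (l : EntryLabel n) : Matrix (Fin n) (Fin n) ℂ :=
  l.halfMatrix + l.halfMatrixᴴ

theorem isHermitian_toMatrix (l : EntryLabel n) : l.toMatrix.IsHermitian :=
  isHermitian_add_transpose_self _

theorem two_mul_re_trace_halfMatrix_mul {A : Matrix (Fin n) (Fin n) ℂ} (hA : A.IsHermitian)
    (l : EntryLabel n) : 2 * (l.halfMatrix * A).trace.re = entryValue A l := by
  rcases l with j | p | p
  · simp [halfMatrix, entryValue, trace_single_mul]
  · simp [halfMatrix, entryValue, trace_single_mul, ← hA.apply p.1.2 p.1.1,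
      two_mul_inv_sqrt_two_mul, ← Complex.ofReal_inv]
  · simp [halfMatrix, entryValue, trace_single_mul, ← hA.apply p.1.2 p.1.1,
      two_mul_inv_sqrt_two_mul, ← Complex.ofReal_inv, mul_assoc]

theorem trace_toMatrix_mul {A : Matrix (Fin n) (Fin n) ℂ} (hA : A.IsHermitian)
    (l : EntryLabel n) : (l.toMatrix * A).trace = entryValue A l := by
  rw [toMatrix, trace_add_conjTranspose_mul _ hA, two_mul_re_trace_halfMatrix_mul hA]

theorem entryValue_toMatrix_self (l : EntryLabel n) : entryValue l.toMatrix l = 1 := by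
  rcases l with j | p | p
  · simp [toMatrix, halfMatrix, entryValue, ← two_mul]
  · simp [toMatrix, halfMatrix, entryValue, p.2.ne, p.2.ne', ← Complex.ofReal_inv]
  · simp [toMatrix, halfMatrix, entryValue, p.2.ne, p.2.ne', ← Complex.ofReal_inv]

theorem entryValue_toMatrix_of_ne {l l' : EntryLabel n} (h : l ≠ l') :
    entryValue l.toMatrix l' = 0 := by
  rcases l with j | ⟨⟨p₁, p₂⟩, hp⟩ | ⟨⟨p₁, p₂⟩, hp⟩ <;>
    rcases l' with k | ⟨⟨q₁, q₂⟩, hq⟩ | ⟨⟨q₁, q₂⟩, hq⟩ <;>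
    simp only [toMatrix, halfMatrix, entryValue, Sum.elim_inl, Sum.elim_inr, conjTranspose_single,
      Matrix.add_apply, single_apply] <;>
    split_ifs <;>
    first
    | simp [← Complex.ofReal_inv]; done
    | exact (h (by grind)).elim

theorem trace_toMatrix_mul_toMatrix [DecidableEq (EntryLabel n)] (l l' : EntryLabel n) :
    (l.toMatrix * l'.toMatrix).trace = if l = l' then 1 else 0 := by
  rw [trace_toMatrix_mul l'.isHermitian_toMatrix]
  split_ifs with h
  · rw [h, entryValue_toMatrix_self, Complex.ofReal_one]
  · rw [entryValue_toMatrix_of_ne (Ne.symm h), Complex.ofReal_zero]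

theorem two_mul_sum_norm_halfMatrix_le (l : EntryLabel n) :
    2 * ∑ r, ∑ s, ‖l.halfMatrix r s‖ ≤ √2 := by
  have hsum (j k : Fin n) (c : ℂ) : ∑ r, ∑ s, ‖single j k c r s‖ = ‖c‖ := by
    simp [single_apply, ite_and, apply_ite norm]
  have hsqrt : 2 * (√2)⁻¹ = √2 := by simpa using two_mul_inv_sqrt_two_mul 1
  rcases l with j | p | p
  · simp [halfMatrix, hsum]
  · simp [halfMatrix, hsum, abs_of_nonneg, hsqrt]
  · simp [halfMatrix, hsum, abs_of_nonneg, hsqrt]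

theorem sum_norm_toMatrix_le (l : EntryLabel n) : ∑ r, ∑ s, ‖l.toMatrix r s‖ ≤ √2 :=
  calc ∑ r, ∑ s, ‖l.toMatrix r s‖
      ≤ ∑ r, ∑ s, (‖l.halfMatrix r s‖ + ‖l.halfMatrix s r‖) := by
        gcongr with r _ s
        simpa [toMatrix] using norm_add_le (l.halfMatrix r s) (l.halfMatrixᴴ r s)
    _ = 2 * ∑ r, ∑ s, ‖l.halfMatrix r s‖ := by
        rw [two_mul]
        simp only [Finset.sum_add_distrib]
        rw [Finset.sum_comm (f := fun r s ↦ ‖l.halfMatrix s r‖)]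
    _ ≤ √2 := l.two_mul_sum_norm_halfMatrix_le

end EntryLabel

end EntryLabels

section HaarUnitary

open scoped Matrix.Norms.L2Operator ComplexOrder

/-- The Hilbert–Schmidt norm of a complex square matrix. -/
noncomputable def hsNorm {ι : Type*} [Fintype ι] (B : Matrix ι ι ℂ) : ℝ :=
  √(B * Bᴴ).trace.re

theorem ofReal_hsNorm_sq {ι : Type*} [Fintype ι] (B : Matrix ι ι ℂ) :
    ((hsNorm B ^ 2 : ℝ) : ℂ) = (B * Bᴴ).trace := by
  have h : 0 ≤ (B * Bᴴ).trace := (posSemidef_self_mul_conjTranspose B).trace_nonneg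
  rw [hsNorm, Real.sq_sqrt (Complex.nonneg_iff.1 h).1]
  exact Complex.ext rfl (Complex.nonneg_iff.1 h).2

theorem hsNorm_ne_zero {ι : Type*} [Fintype ι] {B : Matrix ι ι ℂ} (hB : B ≠ 0) :
    hsNorm B ≠ 0 := fun h ↦
  hB <| trace_mul_conjTranspose_self_eq_zero_iff.1 <| by simp [← ofReal_hsNorm_sq, h]

theorem nontrivial_of_trace_eq_zero {ι R : Type*} [Fintype ι] [AddCommMonoid R]
    {B : Matrix ι ι R} (hB : B ≠ 0) (h : B.trace = 0) : Nontrivial ι := by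
  by_contra! hι
  refine hB (Matrix.ext fun i j ↦ ?_)
  rw [trace, Fintype.sum_subsingleton _ i] at h
  rw [Subsingleton.elim j i]
  exact h

variable {n d : ℕ} {Ω : Type*} [MeasurableSpace Ω] {P : Measure Ω} [IsProbabilityMeasure P]
  {U : Ω → Matrix (Fin n) (Fin n) ℂ}

theorem abs_integral_entryValue_sub_integral_stdGaussian_le [Nontrivial (Fin n)]
    {κ : Type*} [Fintype κ] {D : Matrix (Fin n) (Fin n) ℂ} (hD : D.IsHermitian)
    (hD_tr : D.trace = 0) (hD_sq : (D * D).trace = (n : ℂ) ^ 2 - 1) (hU : Measurable U)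
    (hU_mem : ∀ ω, U ω ∈ unitaryGroup (Fin n) ℂ)
    (hU_haar : ∀ V ∈ unitaryGroup (Fin n) ℂ, P.map (fun ω ↦ V * U ω) = P.map U)
    {φ : κ → EntryLabel n} (hφ : φ.Injective) {f : EuclideanSpace ℝ κ → ℝ} {K : ℝ≥0}
    (hf : LipschitzWith K f) :
    |∫ ω, f (WithLp.toLp 2 fun i ↦ entryValue (U ω * D * (U ω)ᴴ) (φ i)) ∂P -
        ∫ x, f x ∂stdGaussian (EuclideanSpace ℝ κ)| ≤
      K * (6 * Fintype.card κ * √n * (‖D‖ ^ 2 / (n ^ 2 - 1))) := by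
  classical
  have hA := isUnitarilyInvariant_conj_of_haar hU hU_mem hU_haar hD
  have hU' ω : (U ω)ᴴ * U ω = 1 := mem_unitaryGroup_iff'.1 (hU_mem ω)
  have hA_tr ω : (U ω * D * (U ω)ᴴ).trace = 0 := by
    rw [trace_mul_comm, ← Matrix.mul_assoc, hU', one_mul, hD_tr]
  have hA_sq ω : (U ω * D * (U ω)ᴴ * (U ω * D * (U ω)ᴴ)).trace =
      (Fintype.card (Fin n) : ℂ) ^ 2 - 1 := by
    have h : U ω * D * (U ω)ᴴ * (U ω * D * (U ω)ᴴ) = U ω * (D * D) * (U ω)ᴴ := by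
      simp only [Matrix.mul_assoc, ← Matrix.mul_assoc (U ω)ᴴ, hU', Matrix.one_mul]
    rw [h, trace_mul_comm, ← Matrix.mul_assoc, hU', Matrix.one_mul, hD_sq, Fintype.card_fin]
  have hX ω : WithLp.toLp 2 (fun i ↦ entryValue (U ω * D * (U ω)ᴴ) (φ i)) =
      traceVector (fun i ↦ (φ i).toMatrix) (U ω * D * (U ω)ᴴ) := by
    ext i
    simp [EntryLabel.trace_toMatrix_mul (hA.isHermitian ω)]
  have h := hA.abs_integral_traceVector_sub_integral_stdGaussian_le hA_tr hA_sq (norm_nonneg D)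
    (fun ω ↦ (norm_conj_of_mem_unitaryGroup (hU_mem ω) D).le) (fun i ↦ (φ i).isHermitian_toMatrix)
    (fun i j ↦ by simp [EntryLabel.trace_toMatrix_mul_toMatrix, hφ.eq_iff])
    (fun i ↦ (φ i).sum_norm_toMatrix_le) hf
  simpa only [hX, Fintype.card_fin] using h

theorem stmt7_general {Λ : Matrix (Fin n) (Fin n) ℂ} (hΛ : Λ.IsHermitian) (hΛ_ne : Λ ≠ 0)
    (hΛ_tr : Λ.trace = 0) (hU : Measurable U) (hU_mem : ∀ ω, U ω ∈ unitaryGroup (Fin n) ℂ)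
    (hU_haar : ∀ V ∈ unitaryGroup (Fin n) ℂ, P.map (fun ω ↦ V * U ω) = P.map U)
    {φ : Fin d → EntryLabel n} (hφ : φ.Injective) {f : (Fin d → ℝ) → ℝ}
    (hf : ∀ x y, |f x - f y| ≤ √(∑ i, (x i - y i) ^ 2)) :
    |∫ ω, f (fun i ↦ √((n : ℝ) ^ 2 - 1) / hsNorm Λ * entryValue (U ω * Λ * (U ω)ᴴ) (φ i)) ∂P -
        ∫ x, f x ∂(Measure.pi fun _ ↦ gaussianReal 0 1)| ≤
      6 * d * √n * (‖Λ‖ ^ 2 / hsNorm Λ ^ 2) := by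
  have := nontrivial_of_trace_eq_zero hΛ_ne hΛ_tr
  have hn : (1 : ℝ) < n := by simpa using (Fintype.one_lt_card : 1 < Fintype.card (Fin n))
  set c : ℝ := √((n : ℝ) ^ 2 - 1) / hsNorm Λ with hc
  have hc_sq : c ^ 2 * hsNorm Λ ^ 2 = n ^ 2 - 1 := by
    rw [hc, div_pow, Real.sq_sqrt (by nlinarith),
      div_mul_cancel₀ _ (pow_ne_zero 2 (hsNorm_ne_zero hΛ_ne))]
  have hD : ((c : ℂ) • Λ).IsHermitian := by simp [IsHermitian, hΛ.eq]
  have hD_sq : ((c : ℂ) • Λ * (c : ℂ) • Λ).trace = (n : ℂ) ^ 2 - 1 := by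
    have h := ofReal_hsNorm_sq Λ
    rw [hΛ.eq] at h
    rw [smul_mul_smul_comm, trace_smul, ← h, ← sq, smul_eq_mul]
    exact_mod_cast hc_sq
  have hf' : LipschitzWith 1 fun x : EuclideanSpace ℝ (Fin d) ↦ f x :=
    .of_dist_le_mul fun x y ↦ by simpa [EuclideanSpace.dist_eq, Real.dist_eq] using hf x y
  have hgauss : ∫ x, f x ∂stdGaussian (EuclideanSpace ℝ (Fin d)) =
      ∫ x, f x ∂(Measure.pi fun _ ↦ gaussianReal 0 1) := by
    rw [← map_pi_eq_stdGaussian, integral_map (by fun_prop)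
      hf'.continuous.aestronglyMeasurable]
  have hnorm : ‖(c : ℂ) • Λ‖ ^ 2 / (n ^ 2 - 1) = ‖Λ‖ ^ 2 / hsNorm Λ ^ 2 := by
    have hc_ne : c ^ 2 ≠ 0 := by
      refine left_ne_zero_of_mul (b := hsNorm Λ ^ 2) ?_
      rw [hc_sq]
      nlinarith
    rw [← hc_sq, norm_smul, mul_pow, Complex.norm_real, Real.norm_eq_abs, sq_abs,
      mul_div_mul_left _ _ hc_ne]
  have h := abs_integral_entryValue_sub_integral_stdGaussian_le hD (by simp [hΛ_tr]) hD_sq hU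
    hU_mem hU_haar hφ hf'
  simpa only [Matrix.mul_smul, Matrix.smul_mul, entryValue_smul, hgauss, hnorm, NNReal.coe_one,
    one_mul, Fintype.card_fin] using h

theorem hsNorm_map_ofReal (Λ : Matrix (Fin n) (Fin n) ℝ) :
    hsNorm (Λ.map fun x ↦ (x : ℂ)) = hsNormR Λ := by
  simp [hsNorm, hsNormR, trace, mul_apply]

theorem norm_map_ofReal_of_isDiag {Λ : Matrix (Fin n) (Fin n) ℝ} (hΛ : Λ.IsDiag) :
    ‖Λ.map fun x ↦ (x : ℂ)‖ = opNormR Λ := by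
  rw [opNormR, ← cstar_norm_def, ← hΛ.diagonal_diag, diagonal_map Complex.ofReal_zero,
    l2_opNorm_diagonal, l2_opNorm_diagonal]
  simp [Pi.norm_def]

theorem isHermitian_map_ofReal_of_isDiag {Λ : Matrix (Fin n) (Fin n) ℝ} (hΛ : Λ.IsDiag) :
    (Λ.map fun x ↦ (x : ℂ)).IsHermitian := by
  rw [← hΛ.diagonal_diag, diagonal_map Complex.ofReal_zero]
  exact isHermitian_diagonal_of_self_adjoint _ (by ext i; simp)

end HaarUnitary

theorem stmt7 {n d : ℕ}
    (Λ : Matrix (Fin n) (Fin n) ℝ) (hdiag : Λ.IsDiag) (hΛne : Λ ≠ 0)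
    (hΛtr : Λ.trace = 0)
    {Ω : Type*} [MeasurableSpace Ω] (P : Measure Ω) [IsProbabilityMeasure P]
    -- U is Haar distributed on the unitary group:
    (U : Ω → Matrix (Fin n) (Fin n) ℂ) (hUmeas : Measurable U)
    (hUmem : ∀ ω, U ω ∈ Matrix.unitaryGroup (Fin n) ℂ)
    (hUhaar : ∀ V ∈ Matrix.unitaryGroup (Fin n) ℂ,
      Measure.map (fun ω => V * U ω) P = Measure.map U P)
    -- the coordinates of X are distinct choices among the entry functionals:
    (φ : Fin d → EntryLabel n) (hφ : Function.Injective φ)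
    -- W₁ bound, in dual (1-Lipschitz test function) form:
    (f : (Fin d → ℝ) → ℝ)
    (hf : ∀ x y : Fin d → ℝ, |f x - f y| ≤ Real.sqrt (∑ i, (x i - y i) ^ 2)) :
    |(∫ ω, f (fun i =>
          (Real.sqrt ((n : ℝ) ^ 2 - 1) / hsNormR Λ) *
            entryValue (U ω * Λ.map (fun x => (x : ℂ)) * (U ω)ᴴ) (φ i)) ∂P) -
        ∫ x, f x ∂(Measure.pi fun _ : Fin d => gaussianReal 0 1)| ≤
      9 * d * Real.sqrt n * ((opNormR Λ) ^ 2 / (hsNormR Λ) ^ 2) := by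
  rw [← hsNorm_map_ofReal, ← norm_map_ofReal_of_isDiag hdiag]
  exact (stmt7_general (isHermitian_map_ofReal_of_isDiag hdiag)
    (by simpa [← Matrix.ext_iff] using hΛne)
    (by simpa [trace] using congrArg Complex.ofReal hΛtr) hUmeas hUmem hUhaar hφ hf).trans
    (by gcongr; norm_num)
end

section
/- Let Z be uniformly distributed on the unit sphere of ℂⁿ, and let B and C be traceless n×n complex Hermitian matrices. Then E[ ⟨B Z, Z⟩ ] = 0 and E[ ⟨B Z, Z⟩ · ⟨C Z, Z⟩ ] = tr(BC) / (n(n+1)), where ⟨Bz, z⟩ denotes the (real-valued) quadratic form of the Hermitian matrix B evaluated at z. -/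
open MeasureTheory ProbabilityTheory Matrix
open scoped Matrix

/-!
Diagonal phases kill every mixed fourth moment `E[z̄ᵢ zⱼ z̄ₖ zₗ]` in which `{i, k}` and `{j, l}`
differ as multisets. The unitary square root of the transposition of `i` and `j` sends `zᵢ zⱼ` to
`(zᵢ² + zⱼ²) / 2`, so that, the cross terms being killed, `E|zᵢ|⁴ = 2 E|zᵢ|²|zⱼ|²`. All
fourth moments are therefore multiples of `δᵢⱼ δₖₗ + δᵢₗ δₖⱼ`, and `E|z|⁴` determines the factor.
On the sphere `⟨Bz, z⟩ = ⟨Bz, z⟩⟨z, z⟩`, so the mean is the case `C = 1` of the second moment.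
-/

section Unitary

variable {ι : Type*}

lemma exists_phase_ne_one {i j k l : ι} (hij : ¬(i = j ∧ k = l)) (hil : ¬(i = l ∧ k = j)) :
    ∃ u : ι → ℂ, (∀ m, u m ∈ unitary ℂ) ∧ star (u i) * u j * (star (u k) * u l) ≠ 1 := by
  classical
  let u (m : ι) : ι → ℂ := Function.update (1 : ι → ℂ) m Complex.I
  have hu (m p : ι) : u m p ∈ unitary ℂ := by
    obtain rfl | hp := eq_or_ne p m
    · simp [u, Unitary.mem_iff]
    · simp [u, hp]
  -- For `u m` the product is `I ^ e`, with `e` the number of times `m` occurs in `(j, l)` minus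
  -- the number of times it occurs in `(i, k)`; for one of `m = i` and `m = k` this is `-1` or `-2`.
  suffices ∃ m, star (u m i) * u m j * (star (u m k) * u m l) ≠ 1 from
    this.imp' u fun m hm => ⟨hu m, hm⟩
  by_contra! h
  have hi := h i
  have hk := h k
  simp only [u, Function.update_apply, Pi.one_apply] at hi hk
  clear h
  have hI : Complex.I ≠ 1 ∧ -Complex.I ≠ 1 := by simp [Complex.ext_iff]
  have hI_mul : Complex.I * Complex.I = -1 := Complex.I_mul_I
  have hI_star : star Complex.I = -Complex.I := Complex.conj_I
  grind [star_one]

variable [Fintype ι] [DecidableEq ι]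

lemma diagonal_mem_unitaryGroup {R : Type*} [CommRing R] [StarRing R] {u : ι → R}
    (hu : ∀ i, u i ∈ unitary R) : diagonal u ∈ unitaryGroup ι R := by
  rw [mem_unitaryGroup_iff', star_eq_conjTranspose, diagonal_conjTranspose,
    diagonal_mul_diagonal, ← diagonal_one]
  exact congrArg diagonal (funext fun i => Unitary.star_mul_self_of_mem (hu i))

lemma permMatrix_mem_unitaryGroup {R : Type*} [CommRing R] [StarRing R] (σ : Equiv.Perm ι) :
    σ.permMatrix R ∈ unitaryGroup ι R := by
  rw [mem_unitaryGroup_iff', star_eq_conjTranspose, conjTranspose_permMatrix, ← permMatrix_mul,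
    mul_inv_cancel, permMatrix_one]

/-- The square root of an involution `s` that has the eigenvalues `1` and `i` where `s` has
`1` and `-1`; it serves to average two coordinates by means of a transposition. -/
noncomputable def sqrtInvolution {A : Type*} [Ring A] [Algebra ℂ A] (s : A) : A :=
  ((1 + Complex.I) / 2) • (1 : A) + ((1 - Complex.I) / 2) • s

lemma sqrtInvolution_mem_unitary {A : Type*} [Ring A] [StarRing A] [Algebra ℂ A] [StarModule ℂ A]
    {s : A} (hs : IsSelfAdjoint s) (hs_sq : s * s = 1) : sqrtInvolution s ∈ unitary A := by
  have hstar : star (sqrtInvolution s) =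
      ((1 - Complex.I) / 2) • (1 : A) + ((1 + Complex.I) / 2) • s := by
    simp [sqrtInvolution, hs.star_eq, sub_eq_add_neg]
  rw [Unitary.mem_iff, hstar]
  constructor <;>
  · simp only [sqrtInvolution, add_mul, mul_add, smul_mul_smul_comm, one_mul, mul_one, hs_sq]
    match_scalars
    · linear_combination -Complex.I_sq / 2
    · linear_combination Complex.I_sq / 2

lemma sqrtInvolution_swap_mem_unitaryGroup (i j : ι) :
    sqrtInvolution ((Equiv.swap i j).permMatrix ℂ) ∈ unitaryGroup ι ℂ := by
  refine sqrtInvolution_mem_unitary ?_ ?_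
  · rw [isSelfAdjoint_iff, star_eq_conjTranspose, conjTranspose_permMatrix, Equiv.swap_inv]
  · rw [← permMatrix_mul, Equiv.swap_mul_self, permMatrix_one]

lemma sqrtInvolution_swap_mulVec (i j : ι) (z : ι → ℂ) (k : ι) :
    (sqrtInvolution ((Equiv.swap i j).permMatrix ℂ) *ᵥ z) k =
      (1 + Complex.I) / 2 * z k + (1 - Complex.I) / 2 * z (Equiv.swap i j k) := by
  simp [sqrtInvolution, add_mulVec, smul_mulVec, permMatrix_mulVec]

lemma sqrtInvolution_swap_mulVec_mul (i j : ι) (z : ι → ℂ) :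
    (sqrtInvolution ((Equiv.swap i j).permMatrix ℂ) *ᵥ z) i *
      (sqrtInvolution ((Equiv.swap i j).permMatrix ℂ) *ᵥ z) j = (z i ^ 2 + z j ^ 2) / 2 := by
  simp only [sqrtInvolution_swap_mulVec, Equiv.swap_apply_left, Equiv.swap_apply_right]
  linear_combination (2 * z i * z j - z i ^ 2 - z j ^ 2) / 4 * Complex.I_sq

end Unitary

section FourthMoment

variable {ι : Type*} {μ : Measure (ι → ℂ)}

/-- The mixed fourth moment `E[z̄ᵢ zⱼ z̄ₖ zₗ]` of a measure on `ℂ^ι`: the conjugated coordinates are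
the first and the third. -/
noncomputable def fourthMoment (μ : Measure (ι → ℂ)) (i j k l : ι) : ℂ :=
  ∫ z, star (z i) * z j * (star (z k) * z l) ∂μ

lemma fourthMoment_swap_unconj (i j k l : ι) :
    fourthMoment μ i j k l = fourthMoment μ i l k j :=
  integral_congr_ae (.of_forall fun z => by ring)

lemma integrable_fourthMoment (hμ4 : ∀ i, MemLp (fun z => z i) 4 μ) (i j k l : ι) :
    Integrable (fun z => star (z i) * z j * (star (z k) * z l)) μ := by
  have : ENNReal.HolderTriple 4 4 2 := ⟨by
    rw [← two_mul, show (4 : ENNReal) = 2 * 2 by norm_num,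
      ENNReal.mul_inv (by simp) (by simp), ← mul_assoc,
      ENNReal.mul_inv_cancel (by simp) (by simp), one_mul]⟩
  have hpair (i j : ι) : MemLp (fun z => star (z i) * z j) 2 μ := (hμ4 j).mul' (hμ4 i).star
  exact (hpair i j).integrable_mul (hpair k l)

variable [Fintype ι] [DecidableEq ι]

/-- A measure on `ℂ^ι` that every unitary matrix preserves, such as the uniform distribution on a
sphere centred at `0`. -/
def IsUnitarilyInvariant_s19 (μ : Measure (ι → ℂ)) : Prop :=
  ∀ V ∈ unitaryGroup ι ℂ, μ.map (V *ᵥ ·) = μ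

namespace IsUnitarilyInvariant_s19

lemma integral_mulVec {E : Type*} [NormedAddCommGroup E] [NormedSpace ℝ E]
    (hμ : IsUnitarilyInvariant_s19 μ) {V : Matrix ι ι ℂ} (hV : V ∈ unitaryGroup ι ℂ)
    {f : (ι → ℂ) → E} (hf : AEStronglyMeasurable f μ) :
    ∫ z, f (V *ᵥ z) ∂μ = ∫ z, f z ∂μ := by
  have hV_meas : Measurable fun z : ι → ℂ => V *ᵥ z :=
    (continuous_const.matrix_mulVec continuous_id).measurable
  rw [← integral_map hV_meas.aemeasurable (by rwa [hμ V hV]), hμ V hV]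

lemma integral_mulVec_fourth (hμ : IsUnitarilyInvariant_s19 μ) {V : Matrix ι ι ℂ}
    (hV : V ∈ unitaryGroup ι ℂ) (i j k l : ι) :
    ∫ z, star ((V *ᵥ z) i) * (V *ᵥ z) j * (star ((V *ᵥ z) k) * (V *ᵥ z) l) ∂μ =
      fourthMoment μ i j k l :=
  hμ.integral_mulVec hV (f := fun z => star (z i) * z j * (star (z k) * z l))
    (by fun_prop : Continuous _).aestronglyMeasurable

lemma fourthMoment_perm (hμ : IsUnitarilyInvariant_s19 μ) (σ : Equiv.Perm ι) (i j k l : ι) :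
    fourthMoment μ (σ i) (σ j) (σ k) (σ l) = fourthMoment μ i j k l := by
  rw [← hμ.integral_mulVec_fourth (permMatrix_mem_unitaryGroup σ) i j k l]
  simp only [permMatrix_mulVec, Function.comp_apply, fourthMoment]

lemma fourthMoment_self_eq_self (hμ : IsUnitarilyInvariant_s19 μ) (i j : ι) :
    fourthMoment μ i i i i = fourthMoment μ j j j j := by
  simpa using hμ.fourthMoment_perm (Equiv.swap i j) j j j j

lemma phase_mul_fourthMoment (hμ : IsUnitarilyInvariant_s19 μ) {u : ι → ℂ}
    (hu : ∀ i, u i ∈ unitary ℂ) (i j k l : ι) :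
    star (u i) * u j * (star (u k) * u l) * fourthMoment μ i j k l = fourthMoment μ i j k l := by
  conv_rhs => rw [← hμ.integral_mulVec_fourth (diagonal_mem_unitaryGroup hu) i j k l]
  simp only [mulVec_diagonal, star_mul', fourthMoment, ← integral_const_mul]
  exact integral_congr_ae (.of_forall fun z => by ring)

lemma fourthMoment_eq_zero (hμ : IsUnitarilyInvariant_s19 μ) {i j k l : ι}
    (hij : ¬(i = j ∧ k = l)) (hil : ¬(i = l ∧ k = j)) : fourthMoment μ i j k l = 0 := by
  obtain ⟨u, hu, hu_ne⟩ := exists_phase_ne_one hij hil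
  exact eq_zero_of_mul_eq_self_left hu_ne (hμ.phase_mul_fourthMoment hu i j k l)

lemma four_mul_fourthMoment (hμ : IsUnitarilyInvariant_s19 μ)
    (hμ4 : ∀ i, MemLp (fun z => z i) 4 μ) (i j : ι) :
    4 * fourthMoment μ i i j j = fourthMoment μ i i i i + fourthMoment μ j j j j
      + fourthMoment μ i j i j + fourthMoment μ j i j i := by
  have hint := integrable_fourthMoment hμ4
  rw [← hμ.integral_mulVec_fourth (sqrtInvolution_swap_mem_unitaryGroup i j) i i j j,
    ← integral_const_mul]
  simp only [fourthMoment]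
  rw [← integral_add (hint i i i i) (hint j j j j),
    ← integral_add ((hint i i i i).fun_add (hint j j j j)) (hint i j i j),
    ← integral_add (((hint i i i i).fun_add (hint j j j j)).fun_add (hint i j i j))
      (hint j i j i)]
  refine integral_congr_ae (.of_forall fun z => ?_)
  set w := sqrtInvolution ((Equiv.swap i j).permMatrix ℂ) *ᵥ z
  have hw : w i * w j = (z i ^ 2 + z j ^ 2) / 2 := sqrtInvolution_swap_mulVec_mul i j z
  calc 4 * (star (w i) * w i * (star (w j) * w j))
      = 4 * (star (w i * w j) * (w i * w j)) := by rw [star_mul']; ring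
    _ = _ := by
      rw [hw, star_div₀, star_add, star_pow, star_pow, star_ofNat]
      ring

lemma two_mul_fourthMoment_of_ne (hμ : IsUnitarilyInvariant_s19 μ)
    (hμ4 : ∀ i, MemLp (fun z => z i) 4 μ) {i j : ι} (hij : i ≠ j) :
    2 * fourthMoment μ i i j j = fourthMoment μ i i i i := by
  have hcross {p q : ι} (hpq : p ≠ q) : fourthMoment μ p q p q = 0 :=
    hμ.fourthMoment_eq_zero (fun h => hpq h.1) (fun h => hpq h.1)
  have hexpand := hμ.four_mul_fourthMoment hμ4 i j
  rw [hcross hij, hcross hij.symm, hμ.fourthMoment_self_eq_self j i] at hexpand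
  linear_combination hexpand / 2

lemma fourthMoment_diag (hμ : IsUnitarilyInvariant_s19 μ) (hμ4 : ∀ i, MemLp (fun z => z i) 4 μ)
    (i j k : ι) :
    fourthMoment μ j j k k =
      fourthMoment μ i i i i / 2 * (1 + (1 : Matrix ι ι ℂ) j k) := by
  obtain rfl | hjk := eq_or_ne j k
  · rw [one_apply_eq, hμ.fourthMoment_self_eq_self j i]
    ring
  · rw [one_apply_ne hjk]
    linear_combination
      (hμ.two_mul_fourthMoment_of_ne hμ4 hjk + hμ.fourthMoment_self_eq_self j i) / 2

end IsUnitarilyInvariant_s19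

end FourthMoment

section QuadForm

variable {ι : Type*} [Fintype ι]

/-- The quadratic form `⟨A z, z⟩ = ∑ᵢⱼ z̄ᵢ Aᵢⱼ zⱼ` of a complex matrix. -/
def quadForm (A : Matrix ι ι ℂ) (z : ι → ℂ) : ℂ :=
  star z ⬝ᵥ A *ᵥ z

lemma quadForm_eq_sum (A : Matrix ι ι ℂ) (z : ι → ℂ) :
    quadForm A z = ∑ p : ι × ι, A p.1 p.2 * (star (z p.1) * z p.2) := by
  simp only [quadForm, dotProduct, mulVec, Pi.star_apply, Finset.mul_sum, Fintype.sum_prod_type,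
    mul_left_comm]

lemma quadForm_mul_quadForm_eq_sum (B C : Matrix ι ι ℂ) (z : ι → ℂ) :
    quadForm B z * quadForm C z = ∑ p : ι × ι, ∑ q : ι × ι, B p.1 p.2 * C q.1 q.2 *
      (star (z p.1) * z p.2 * (star (z q.1) * z q.2)) := by
  simp only [quadForm_eq_sum, Finset.sum_mul_sum, mul_mul_mul_comm]

lemma continuous_quadForm (A : Matrix ι ι ℂ) : Continuous (quadForm A) := by
  unfold quadForm
  fun_prop

lemma quadForm_one [DecidableEq ι] (z : ι → ℂ) :
    quadForm 1 z = (∑ i, Complex.normSq (z i) : ℝ) := by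
  simp [quadForm, dotProduct, Complex.normSq_eq_conj_mul_self]

variable {μ : Measure (ι → ℂ)}

lemma integrable_quadForm_mul_quadForm (hμ4 : ∀ i, MemLp (fun z => z i) 4 μ)
    (B C : Matrix ι ι ℂ) : Integrable (fun z => quadForm B z * quadForm C z) μ := by
  simp only [quadForm_mul_quadForm_eq_sum]
  exact integrable_finsetSum _ fun p _ => integrable_finsetSum _ fun q _ =>
    (integrable_fourthMoment hμ4 p.1 p.2 q.1 q.2).const_mul _

lemma integral_quadForm_mul_quadForm_eq_sum (hμ4 : ∀ i, MemLp (fun z => z i) 4 μ)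
    (B C : Matrix ι ι ℂ) :
    ∫ z, quadForm B z * quadForm C z ∂μ = ∑ p : ι × ι, ∑ q : ι × ι,
      B p.1 p.2 * C q.1 q.2 * fourthMoment μ p.1 p.2 q.1 q.2 := by
  have hint (p q : ι × ι) := (integrable_fourthMoment hμ4 p.1 p.2 q.1 q.2).const_mul
    (B p.1 p.2 * C q.1 q.2)
  simp only [quadForm_mul_quadForm_eq_sum]
  rw [integral_finsetSum _ fun p _ => integrable_finsetSum _ fun q _ => hint p q]
  refine Finset.sum_congr rfl fun p _ => ?_
  rw [integral_finsetSum _ fun q _ => hint p q]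
  simp only [integral_const_mul, fourthMoment]

variable [DecidableEq ι]

lemma integral_quadForm_one_sq_eq_sum (hμ4 : ∀ i, MemLp (fun z => z i) 4 μ) :
    ∫ z, quadForm 1 z ^ 2 ∂μ = ∑ i, ∑ j, fourthMoment μ i i j j := by
  simp [pow_two, integral_quadForm_mul_quadForm_eq_sum hμ4, Fintype.sum_prod_type, one_apply]

namespace IsUnitarilyInvariant_s19

lemma fourthMoment_self (hμ : IsUnitarilyInvariant_s19 μ) (hμ4 : ∀ i, MemLp (fun z => z i) 4 μ)
    (i : ι) :
    fourthMoment μ i i i i =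
      2 * (∫ z, quadForm 1 z ^ 2 ∂μ) / (Fintype.card ι * (Fintype.card ι + 1)) := by
  have hcard : (Fintype.card ι : ℂ) ≠ 0 := by
    have : Nonempty ι := ⟨i⟩
    exact_mod_cast Fintype.card_ne_zero
  have hsum : ∫ z, quadForm 1 z ^ 2 ∂μ =
      fourthMoment μ i i i i / 2 * (Fintype.card ι * (Fintype.card ι + 1)) := by
    have hdiag := hμ.fourthMoment_diag hμ4 i
    generalize fourthMoment μ i i i i = a at hdiag ⊢
    simp only [integral_quadForm_one_sq_eq_sum hμ4, hdiag, ← Finset.mul_sum]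
    simp [Finset.sum_add_distrib, one_apply, mul_add]
  have hcard' : (Fintype.card ι + 1 : ℂ) ≠ 0 := Nat.cast_add_one_ne_zero _
  rw [hsum]
  field_simp

lemma fourthMoment_eq (hμ : IsUnitarilyInvariant_s19 μ) (hμ4 : ∀ i, MemLp (fun z => z i) 4 μ)
    (i j k l : ι) :
    fourthMoment μ i j k l =
      ((1 : Matrix ι ι ℂ) i j * (1 : Matrix ι ι ℂ) k l
        + (1 : Matrix ι ι ℂ) i l * (1 : Matrix ι ι ℂ) k j) *
      ((∫ z, quadForm 1 z ^ 2 ∂μ) / (Fintype.card ι * (Fintype.card ι + 1))) := by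
  have hdiag (i k : ι) := hμ.fourthMoment_diag hμ4 i i k
  simp only [hμ.fourthMoment_self hμ4] at hdiag
  by_cases hij : i = j ∧ k = l
  · obtain ⟨rfl, rfl⟩ := hij
    rw [hdiag, one_apply_eq, one_apply_eq]
    obtain rfl | hik := eq_or_ne i k
    · rw [one_apply_eq]; ring
    · rw [one_apply_ne hik]; ring
  by_cases hil : i = l ∧ k = j
  · obtain ⟨rfl, rfl⟩ := hil
    have hik : i ≠ k := fun h => hij ⟨h, h.symm⟩
    rw [fourthMoment_swap_unconj, hdiag, one_apply_ne hik, one_apply_eq, one_apply_eq]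
    ring
  · rw [hμ.fourthMoment_eq_zero hij hil]
    simp only [one_apply]
    grind

theorem integral_quadForm_mul_quadForm (hμ : IsUnitarilyInvariant_s19 μ)
    (hμ4 : ∀ i, MemLp (fun z => z i) 4 μ) (B C : Matrix ι ι ℂ) :
    ∫ z, quadForm B z * quadForm C z ∂μ =
      (B.trace * C.trace + (B * C).trace) *
      ((∫ z, quadForm 1 z ^ 2 ∂μ) / (Fintype.card ι * (Fintype.card ι + 1))) := by
  simp only [integral_quadForm_mul_quadForm_eq_sum hμ4, hμ.fourthMoment_eq hμ4, ← mul_assoc,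
    ← Finset.sum_mul]
  congr 1
  simp [Fintype.sum_prod_type, one_apply, mul_add, Finset.sum_add_distrib, trace, mul_apply,
    Finset.sum_mul_sum]

end IsUnitarilyInvariant_s19

end QuadForm

section Sphere

variable {ι : Type*} [Fintype ι] {μ : Measure (ι → ℂ)}

lemma memLp_apply_of_sum_normSq_eq_one [IsFiniteMeasure μ]
    (hμ : ∀ᵐ z ∂μ, ∑ j, Complex.normSq (z j) = 1) (p : ENNReal) (i : ι) :
    MemLp (fun z => z i) p μ := by
  refine .of_bound (measurable_pi_apply i).aestronglyMeasurable 1 (hμ.mono fun z hz => ?_)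
  rw [← sq_le_one_iff₀ (norm_nonneg _), ← Complex.normSq_eq_norm_sq, ← hz]
  exact Finset.single_le_sum (f := fun j => Complex.normSq (z j))
    (fun j _ => Complex.normSq_nonneg _) (Finset.mem_univ i)

variable [DecidableEq ι]

/-- The uniform distribution on the unit sphere of `ℂ^ι`, characterised as the unitarily invariant
measure of total mass one that is carried by the sphere. -/
structure IsUniformOnSphere (μ : Measure (ι → ℂ)) : Prop where
  isProbabilityMeasure : IsProbabilityMeasure μ
  sum_normSq_eq_one : ∀ᵐ z ∂μ, ∑ j, Complex.normSq (z j) = 1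
  isUnitarilyInvariant : IsUnitarilyInvariant_s19 μ

namespace IsUniformOnSphere

lemma memLp_apply (hμ : IsUniformOnSphere μ) (p : ENNReal) (i : ι) :
    MemLp (fun z => z i) p μ := by
  have := hμ.isProbabilityMeasure
  exact memLp_apply_of_sum_normSq_eq_one hμ.sum_normSq_eq_one p i

lemma quadForm_one_ae_eq (hμ : IsUniformOnSphere μ) : quadForm 1 =ᵐ[μ] 1 :=
  hμ.sum_normSq_eq_one.mono fun z hz => by simp [quadForm_one, hz]

theorem integral_quadForm_mul_quadForm (hμ : IsUniformOnSphere μ) (B C : Matrix ι ι ℂ) :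
    ∫ z, quadForm B z * quadForm C z ∂μ =
      (B.trace * C.trace + (B * C).trace) / (Fintype.card ι * (Fintype.card ι + 1)) := by
  have hnorm : ∫ z, quadForm 1 z ^ 2 ∂μ = 1 := by
    have := hμ.isProbabilityMeasure
    rw [integral_congr_ae (hμ.quadForm_one_ae_eq.mono fun z hz => congrArg (· ^ 2) hz)]
    simp
  rw [hμ.isUnitarilyInvariant.integral_quadForm_mul_quadForm (hμ.memLp_apply 4), hnorm,
    mul_one_div]

lemma quadForm_ae_eq_mul_quadForm_one (hμ : IsUniformOnSphere μ) (B : Matrix ι ι ℂ) :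
    quadForm B =ᵐ[μ] fun z => quadForm B z * quadForm 1 z :=
  hμ.quadForm_one_ae_eq.mono fun z hz => by simp [hz]

lemma integrable_quadForm (hμ : IsUniformOnSphere μ) (B : Matrix ι ι ℂ) :
    Integrable (quadForm B) μ :=
  (integrable_quadForm_mul_quadForm (hμ.memLp_apply 4) B 1).congr
    (hμ.quadForm_ae_eq_mul_quadForm_one B).symm

theorem integral_quadForm (hμ : IsUniformOnSphere μ) (B : Matrix ι ι ℂ) :
    ∫ z, quadForm B z ∂μ = B.trace / Fintype.card ι := by
  have hcard : (Fintype.card ι + 1 : ℂ) ≠ 0 := Nat.cast_add_one_ne_zero _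
  rw [integral_congr_ae (hμ.quadForm_ae_eq_mul_quadForm_one B),
    hμ.integral_quadForm_mul_quadForm, trace_one, mul_one, ← mul_add_one,
    mul_div_mul_right _ _ hcard]

lemma integral_re_quadForm (hμ : IsUniformOnSphere μ) (B : Matrix ι ι ℂ) :
    ∫ z, (quadForm B z).re ∂μ = B.trace.re / Fintype.card ι := by
  have hre : ∫ z, (quadForm B z).re ∂μ = (∫ z, quadForm B z ∂μ).re :=
    integral_re (hμ.integrable_quadForm B)
  rw [hre, hμ.integral_quadForm, Complex.div_natCast_re]

lemma integral_re_quadForm_mul_re_quadForm (hμ : IsUniformOnSphere μ) {B : Matrix ι ι ℂ}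
    (hB : B.IsHermitian) (C : Matrix ι ι ℂ) :
    ∫ z, (quadForm B z).re * (quadForm C z).re ∂μ =
      (B.trace.re * C.trace.re + (B * C).trace.re) /
        ((Fintype.card ι : ℝ) * ((Fintype.card ι : ℝ) + 1)) := by
  have him (z : ι → ℂ) : (quadForm B z).im = 0 := hB.im_star_dotProduct_mulVec_self z
  have htrace : B.trace.im = 0 := by
    rw [← Complex.conj_eq_iff_im]
    exact (trace_conjTranspose B).symm.trans (congrArg trace hB)
  have hre : ∫ z, (quadForm B z * quadForm C z).re ∂μ =
      (∫ z, quadForm B z * quadForm C z ∂μ).re :=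
    integral_re (integrable_quadForm_mul_quadForm (hμ.memLp_apply 4) B C)
  simp only [Complex.mul_re, him, zero_mul, sub_zero] at hre
  rw [hre, hμ.integral_quadForm_mul_quadForm, ← Nat.cast_add_one, ← Nat.cast_mul,
    Complex.div_natCast_re]
  simp [htrace]

end IsUniformOnSphere

lemma isUniformOnSphere_map {Ω : Type*} [MeasurableSpace Ω] {P : Measure Ω}
    [IsProbabilityMeasure P] {Z : Ω → ι → ℂ} (hZmeas : AEMeasurable Z P)
    (hZsph : ∀ᵐ ω ∂P, ∑ j, Complex.normSq (Z ω j) = 1)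
    (hZunif : ∀ V ∈ unitaryGroup ι ℂ, P.map (fun ω => V *ᵥ Z ω) = P.map Z) :
    IsUniformOnSphere (P.map Z) where
  isProbabilityMeasure := Measure.isProbabilityMeasure_map hZmeas
  sum_normSq_eq_one := by
    refine (ae_map_iff hZmeas (measurableSet_eq_fun ?_ measurable_const)).2 hZsph
    exact (by fun_prop : Continuous _).measurable
  isUnitarilyInvariant V hV := by
    have hV_meas : Measurable fun z : ι → ℂ => V *ᵥ z :=
      (continuous_const.matrix_mulVec continuous_id).measurable
    rw [AEMeasurable.map_map_of_aemeasurable hV_meas.aemeasurable hZmeas]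
    exact hZunif V hV

end Sphere

theorem stmt19_general {ι : Type*} [Fintype ι] [DecidableEq ι]
    {Ω : Type*} [MeasurableSpace Ω] (P : Measure Ω) [IsProbabilityMeasure P]
    (Z : Ω → ι → ℂ) (hZmeas : AEMeasurable Z P)
    (hZsph : ∀ᵐ ω ∂P, ∑ j, Complex.normSq (Z ω j) = 1)
    (hZunif : ∀ V ∈ unitaryGroup ι ℂ, P.map (fun ω => V *ᵥ Z ω) = P.map Z)
    (B C : Matrix ι ι ℂ) (hB : B.IsHermitian) :
    (∫ ω, (star (Z ω) ⬝ᵥ B *ᵥ Z ω).re ∂P) = B.trace.re / Fintype.card ι ∧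
    (∫ ω, (star (Z ω) ⬝ᵥ B *ᵥ Z ω).re * (star (Z ω) ⬝ᵥ C *ᵥ Z ω).re ∂P) =
      (B.trace.re * C.trace.re + (B * C).trace.re) /
        ((Fintype.card ι : ℝ) * ((Fintype.card ι : ℝ) + 1)) := by
  have hZ := isUniformOnSphere_map hZmeas hZsph hZunif
  have hmap {f : (ι → ℂ) → ℝ} (hf : Continuous f) : ∫ z, f z ∂P.map Z = ∫ ω, f (Z ω) ∂P :=
    integral_map hZmeas hf.aestronglyMeasurable
  have hcont (A : Matrix ι ι ℂ) : Continuous fun z => (quadForm A z).re :=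
    Complex.continuous_re.comp (continuous_quadForm A)
  exact ⟨(hmap (hcont B)).symm.trans (hZ.integral_re_quadForm B),
    (hmap ((hcont B).mul (hcont C))).symm.trans (hZ.integral_re_quadForm_mul_re_quadForm hB C)⟩

theorem stmt19 {n : ℕ}
    {Ω : Type*} [MeasurableSpace Ω] (P : Measure Ω) [IsProbabilityMeasure P]
    (Z : Ω → Fin n → ℂ) (hZmeas : Measurable Z)
    -- Z takes values in the unit sphere of ℂⁿ:
    (hZsph : ∀ ω, ∑ j, Complex.normSq (Z ω j) = 1)
    -- the law of Z is invariant under the unitary group (uniform on the sphere):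
    (hZunif : ∀ V ∈ Matrix.unitaryGroup (Fin n) ℂ,
      Measure.map (fun ω => Matrix.mulVec V (Z ω)) P = Measure.map Z P)
    (B C : Matrix (Fin n) (Fin n) ℂ)
    (hB : B.IsHermitian) (hBtr : B.trace = 0)
    (hC : C.IsHermitian) (hCtr : C.trace = 0) :
    (∫ ω, (star (Z ω) ⬝ᵥ B.mulVec (Z ω)).re ∂P) = 0 ∧
    (∫ ω, (star (Z ω) ⬝ᵥ B.mulVec (Z ω)).re *
        (star (Z ω) ⬝ᵥ C.mulVec (Z ω)).re ∂P) =
      ((B * C).trace).re / ((n : ℝ) * ((n : ℝ) + 1)) := by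
  simpa [hBtr] using stmt19_general P Z hZmeas.aemeasurable (.of_forall hZsph) hZunif B C hB
end
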